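/- Let n, d ∈ ℕ, q ∈ ℕ∪{0}, K, d⋆, d* ∈ ℕ, β, r, α ∈ (0,∞), τ ∈ (0,∞], ν ∈ [0,∞), b ∈ (0,∞), and G ∈ (0,∞), N ∈ [1,∞), S ∈ (0,∞], B ∈ (0,∞). Assume d* ≤ d, d*·q ≤ K·q, and not both α < 1 and τ ≥ 1. Let f̂_n^NN be an empirical φ_h-risk minimizer over F^NN_d(G,N,S,B,∞) based on an i.i.d. sample of size n from P. Then there exist constants c4 ∈ (0,∞) depending only on (d⋆,d*,β,r,q,τ) and c5 ∈ (0,∞) depending only on (d,α,τ,ν,b) such that whenever 2 ≤ n, c4 ≤ G ≤ b, K·c4 ≤ N ≤ b, 1 ≤ B ≤ b·n^ν, and K·c4 ≤ S, one has sup{E_{P^⊗n}[E_P(f̂_n^NN)] : P ∈ H^{d,β,r}_{q,K,d*,d⋆} ∩ T^{d,∞}_{α,τ}} ≤ c5·(log n)/n. -/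

import Mathlib

open MeasureTheory ENNReal Set

noncomputable section

namespace ZZS

/-! ## Basic geometry -/

/-- The closed unit cube `[0,1]^m`. -/
def cube (m : ℕ) : Set (Fin m → ℝ) := Set.univ.pi fun _ => Set.Icc (0 : ℝ) 1

/-- The open unit cube `(0,1)^m`. -/
def cubeo (m : ℕ) : Set (Fin m → ℝ) := Set.univ.pi fun _ => Set.Ioo (0 : ℝ) 1

/-- The label set `{-1, 1} ⊆ ℝ`. -/
def labels : Set ℝ := {-1, 1}

/-- Euclidean distance on `Fin m → ℝ`. -/
def e2 {m : ℕ} (x z : Fin m → ℝ) : ℝ := Real.sqrt (∑ i, (x i - z i) ^ 2)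

/-! ## Multi-index partial derivatives and Hölder balls -/

/-- Iterated partial derivative along a list of coordinate directions. -/
def pderivList {m : ℕ} : List (Fin m) → ((Fin m → ℝ) → ℝ) → (Fin m → ℝ) → ℝ
  | [], f => f
  | i :: l, f => pderivList l fun x => fderiv ℝ f x (Pi.single i 1)

/-- The canonical list of directions attached to a multi-index. -/
def idxList {m : ℕ} (u : Fin m → ℕ) : List (Fin m) :=
  (List.finRange m).flatMap fun i => List.replicate (u i) i

/-- The partial derivative `D^u f` for a multi-index `u`. -/
def Dm {m : ℕ} (u : Fin m → ℕ) (f : (Fin m → ℝ) → ℝ) : (Fin m → ℝ) → ℝ :=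
  pderivList (idxList u) f

/-- The order `‖u‖₁` of a multi-index `u`. -/
def mord {m : ℕ} (u : Fin m → ℕ) : ℕ := ∑ i, u i

/-- The Hölder-`β` norm of `f`, suprema taken over the set `S` (value in `ℝ≥0∞`). -/
def holderNormOn (m : ℕ) (β : ℝ) (S : Set (Fin m → ℝ)) (f : (Fin m → ℝ) → ℝ) : ℝ≥0∞ :=
  (⨆ (u : Fin m → ℕ) (_ : (mord u : ℝ) < β) (x ∈ S), ENNReal.ofReal |Dm u f x|) +
    ⨆ (u : Fin m → ℕ) (_ : (⌈β⌉ : ℝ) - 1 ≤ (mord u : ℝ) ∧ (mord u : ℝ) < β)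
      (x ∈ S) (z ∈ S) (_ : x ≠ z),
      ENNReal.ofReal |Dm u f x - Dm u f z| /
        ENNReal.ofReal (e2 x z) ^ (β + 1 - (⌈β⌉ : ℝ))

/-- `⌈β - 1⌉`, the number of derivatives required for Hölder-`β` smoothness. -/
def smoothOrder (β : ℝ) : ℕ := ⌈β - 1⌉₊

/-- The Hölder ball `B^β_r([0,1]^m)`:  `⌈β-1⌉`-times continuously differentiable functions on
the interior of the cube (with uniformly continuous derivatives, so that they extend
continuously), with Hölder-`β` norm at most `r`. -/
def HolderBall (m : ℕ) (β r : ℝ) : Set ((Fin m → ℝ) → ℝ) :=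
  {f | ContinuousOn f (cube m) ∧
    ContDiffOn ℝ (smoothOrder β : ℕ∞) f (cubeo m) ∧
    (∀ u : Fin m → ℕ, (mord u : ℝ) < β → UniformContinuousOn (Dm u f) (cubeo m)) ∧
    holderNormOn m β (cubeo m) f ≤ ENNReal.ofReal r}

/-! ## Compositional function classes -/

/-- `G^H_m(dstar, β, r)`: Hölder-`β` functions of `dstar` of the `m` coordinates. -/
def GH (m dstar : ℕ) (β r : ℝ) : Set ((Fin m → ℝ) → ℝ) :=
  {f | ∃ (e : Fin dstar → Fin m) (g : (Fin dstar → ℝ) → ℝ),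
    StrictMono e ∧ g ∈ HolderBall dstar β r ∧ ∀ x ∈ cube m, f x = g fun j => x (e j)}

/-- `G^M_m(dmax)`: maxima of at most `dmax` coordinates. -/
def GM (m dmax : ℕ) : Set ((Fin m → ℝ) → ℝ) :=
  {f | ∃ (I : Finset (Fin m)) (hI : I.Nonempty), I.card ≤ dmax ∧
    ∀ x ∈ cube m, f x = I.sup' hI fun i => x i}

/-- The compositional class `G^CHOM_d(q, K, dmax, dstar, β, r)`. -/
def GCHOM (K dmax dstar : ℕ) (β r : ℝ) : ℕ → (d : ℕ) → Set ((Fin d → ℝ) → ℝ)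
  | 0, d => {f | ∃ h ∈ GH d dstar β r ∪ GM d dmax, ∀ x ∈ cube d, f x = h x}
  | q + 1, d =>
    {f | ∃ (H : (Fin d → ℝ) → Fin K → ℝ) (g : (Fin K → ℝ) → ℝ),
      (∀ j, (fun x => H x j) ∈ GH d dstar β r ∪ GM d dmax) ∧
      (∀ x ∈ cube d, H x ∈ cube K) ∧
      g ∈ GCHOM K dmax dstar β r q K ∧ ∀ x ∈ cube d, f x = g (H x)}

/-- The compositional class `G^CH_d(q, K, dstar, β, r)` (no max-value components). -/
def GCH (K dstar : ℕ) (β r : ℝ) : ℕ → (d : ℕ) → Set ((Fin d → ℝ) → ℝ)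
  | 0, d => {f | ∃ h ∈ GH d dstar β r, ∀ x ∈ cube d, f x = h x}
  | q + 1, d =>
    {f | ∃ (H : (Fin d → ℝ) → Fin K → ℝ) (g : (Fin K → ℝ) → ℝ),
      (∀ j, (fun x => H x j) ∈ GH d dstar β r) ∧
      (∀ x ∈ cube d, H x ∈ cube K) ∧
      g ∈ GCH K dstar β r q K ∧ ∀ x ∈ cube d, f x = g (H x)}

/-! ## Losses, risks, and data distributions -/

/-- The sign function (`sgn 0 = 1`). -/
def sgn (t : ℝ) : ℝ := if 0 ≤ t then 1 else -1

/-- The hinge loss. -/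
def hinge (t : ℝ) : ℝ := max 0 (1 - t)

/-- The truncation operator `T_F`. -/
def trunc (F t : ℝ) : ℝ := min F (max (-F) t)

/-- The joint distribution `P_{η,Q}` on `[0,1]^d × {-1,1}` with input marginal `Q` and
conditional class probability function `η`. -/
def jointMeasure {d : ℕ} (η : (Fin d → ℝ) → ℝ) (Q : Measure (Fin d → ℝ)) :
    Measure ((Fin d → ℝ) × ℝ) :=
  Q.bind fun x =>
    ENNReal.ofReal (η x) • Measure.dirac (x, (1 : ℝ)) +
      ENNReal.ofReal (1 - η x) • Measure.dirac (x, (-1 : ℝ))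

/-- The 0-1 risk (misclassification error). -/
def risk01 {d : ℕ} (P : Measure ((Fin d → ℝ) × ℝ)) (f : (Fin d → ℝ) → ℝ) : ℝ :=
  (P {p | sgn (f p.1) ≠ p.2}).toReal

/-- The infimum of the 0-1 risk over all measurable functions. -/
def bayes01 {d : ℕ} (P : Measure ((Fin d → ℝ) × ℝ)) : ℝ :=
  ⨅ g : {g : (Fin d → ℝ) → ℝ // Measurable g}, risk01 P g.1

/-- The excess 0-1 risk. -/
def excess01 {d : ℕ} (P : Measure ((Fin d → ℝ) × ℝ)) (f : (Fin d → ℝ) → ℝ) : ℝ :=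
  risk01 P f - bayes01 P

/-- The `φ`-risk. -/
def riskPhi {d : ℕ} (φ : ℝ → ℝ) (P : Measure ((Fin d → ℝ) × ℝ)) (f : (Fin d → ℝ) → ℝ) : ℝ :=
  ∫ p, φ (p.2 * f p.1) ∂P

/-- The infimum of the `φ`-risk over all measurable functions. -/
def bayesPhi {d : ℕ} (φ : ℝ → ℝ) (P : Measure ((Fin d → ℝ) × ℝ)) : ℝ :=
  ⨅ g : {g : (Fin d → ℝ) → ℝ // Measurable g}, riskPhi φ P g.1

/-- The excess `φ`-risk. -/
def excessPhi {d : ℕ} (φ : ℝ → ℝ) (P : Measure ((Fin d → ℝ) × ℝ)) (f : (Fin d → ℝ) → ℝ) : ℝ :=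
  riskPhi φ P f - bayesPhi φ P

/-- A Borel probability measure on `[0,1]^d × {-1,1}`, presented by its input marginal `Q`
(a Borel probability measure concentrated on the cube) and its conditional class
probability function `η` (measurable, `[0,1]`-valued);  the measure itself is
`jointMeasure η Q`. -/
structure DataDist (d : ℕ) where
  η : (Fin d → ℝ) → ℝ
  Q : Measure (Fin d → ℝ)
  η_meas : Measurable η
  η_mem : ∀ x, η x ∈ Set.Icc (0 : ℝ) 1
  Q_prob : IsProbabilityMeasure Q
  Q_cube : Q (cube d) = 1

/-- The measure on `[0,1]^d × {-1,1}` associated with a `DataDist`. -/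
def DataDist.P {d : ℕ} (D : DataDist d) : Measure ((Fin d → ℝ) × ℝ) := jointMeasure D.η D.Q

/-- `x ^ s` for `s ∈ [0,∞]`, with the conventions `x ^ ∞ = 0` for `x < 1` and `1 ^ ∞ = 1`. -/
def rpowE (x : ℝ≥0∞) (s : ℝ≥0∞) : ℝ≥0∞ :=
  if s = ∞ then (if x < 1 then 0 else if x = 1 then 1 else ∞) else x ^ s.toReal

/-- The Tsybakov noise class `T^{d,s}_{α,τ}` (noise exponent `s ∈ [0,∞]`,
threshold `τ ∈ (0,∞]`). -/
def Tsybakov (d : ℕ) (s : ℝ≥0∞) (α : ℝ) (τ : ℝ≥0∞) : Set (DataDist d) :=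
  {P | ∀ t : ℝ, 0 < t → ENNReal.ofReal t ≤ τ →
    P.Q ({x | |2 * P.η x - 1| ≤ t} ∩ cube d) ≤ ENNReal.ofReal α * rpowE (ENNReal.ofReal t) s}

/-- The class `H^{d,β,r}_{q,K,dstar,dmax}`: distributions whose conditional class probability
agrees a.s. with a member of `G^CHOM`. -/
def HCHOM (d q K dstar dmax : ℕ) (β r : ℝ) : Set (DataDist d) :=
  {P | ∃ f ∈ GCHOM K dmax dstar β r q d, ∀ᵐ x ∂P.Q, P.η x = f x}

/-- `M_{Λ,d}`: Borel probability measures on `[0,1]^d` with a `[0,Λ]`-valued density with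
respect to Lebesgue measure. -/
def MLam (d : ℕ) (Λ : ℝ) : Set (Measure (Fin d → ℝ)) :=
  {Q | ∃ g : (Fin d → ℝ) → ℝ, Measurable g ∧ (∀ x, g x ∈ Set.Icc 0 Λ) ∧
    Q = (volume.restrict (cube d)).withDensity fun x => ENNReal.ofReal (g x)}

/-- The class `H^{d,β,r,Λ}_{q,K,dstar}`: joint laws `P_{η,Q}` with `η ∈ G^CH` (valued in
`[0,1]`) and `Q ∈ M_{Λ,d}`. -/
def HCHL (d q K dstar : ℕ) (β r Λ : ℝ) : Set (DataDist d) :=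
  {P | (∃ f ∈ GCH K dstar β r q d, (∀ x ∈ cube d, f x ∈ Set.Icc (0 : ℝ) 1) ∧
      ∀ᵐ x ∂P.Q, P.η x = f x) ∧ P.Q ∈ MLam d Λ}

/-- The class `H^{d,β,r}_{q,K,dstar}`: joint laws `P_{η,Q}` with `η ∈ G^CH` (valued in
`[0,1]`) and `Q` an arbitrary Borel probability measure on the cube. -/
def HCH (d q K dstar : ℕ) (β r : ℝ) : Set (DataDist d) :=
  {P | ∃ f ∈ GCH K dstar β r q d, (∀ x ∈ cube d, f x ∈ Set.Icc (0 : ℝ) 1) ∧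
    ∀ᵐ x ∂P.Q, P.η x = f x}

/-! ## Samples and estimators -/

/-- The law of an i.i.d. sample of size `n` from `μ`. -/
def iid {α : Type*} [MeasurableSpace α] (μ : Measure α) : (n : ℕ) → Measure (Fin n → α)
  | 0 => Measure.dirac fun i => i.elim0
  | n + 1 => (iid μ n).bind fun p => μ.map fun a => Fin.snoc p a

/-- An estimator: a rule assigning to each sample of size `n` a function `[0,1]^d → ℝ`. -/
def Estimator (d n : ℕ) := (Fin n → (Fin d → ℝ) × ℝ) → (Fin d → ℝ) → ℝ

/-- (Joint) measurability of an estimator. -/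
def Estimator.Meas {d n : ℕ} (A : Estimator d n) : Prop :=
  Measurable fun p : (Fin n → (Fin d → ℝ) × ℝ) × (Fin d → ℝ) => A p.1 p.2

/-- The expected excess 0-1 risk `E_{P^{⊗n}}[E_P(f̂_n)]` of an estimator. -/
def expectedExcess01 {d : ℕ} (P : Measure ((Fin d → ℝ) × ℝ)) {n : ℕ} (A : Estimator d n) : ℝ :=
  ∫ ω, excess01 P (A ω) ∂iid P n

/-- The covering number `N(F, γ)` (uniform norm over `Ω`), valued in `ℝ≥0∞`. -/
def coveringNumber {X : Type*} (Ω : Set X) (F : Set (X → ℝ)) (γ : ℝ) : ℝ≥0∞ :=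
  ⨅ (A : Finset (X → ℝ))
    (_ : ↑A ⊆ F ∧ ∀ f ∈ F, ∃ g ∈ A, ∀ x ∈ Ω, |f x - g x| ≤ γ),
    (A.card : ℝ≥0∞)

/-- `f` is an empirical `φ`-risk minimizer over `F` for the sample `ω`. -/
def IsERM {d n : ℕ} (φ : ℝ → ℝ) (F : Set ((Fin d → ℝ) → ℝ))
    (ω : Fin n → (Fin d → ℝ) × ℝ) (f : (Fin d → ℝ) → ℝ) : Prop :=
  f ∈ F ∧ ∀ g ∈ F,
    (n : ℝ)⁻¹ * ∑ i, φ ((ω i).2 * f ((ω i).1)) ≤ (n : ℝ)⁻¹ * ∑ i, φ ((ω i).2 * g ((ω i).1))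

/-! ## ReLU neural networks -/

/-- A feedforward ReLU network with input dimension `d`. -/
structure ReLUNet (d : ℕ) where
  L : ℕ
  width : ℕ → ℕ
  W : (i : ℕ) → Fin (width (i + 1)) → Fin (width i) → ℝ
  v : (i : ℕ) → Fin (width i) → ℝ
  h0 : width 0 = d
  hL : width (L + 1) = 1

/-- The `i`-th intermediate layer output `W_i σ_{v_i} ⋯ W_1 σ_{v_1} W_0 x`. -/
def ReLUNet.layer {d : ℕ} (net : ReLUNet d) (x : Fin (net.width 0) → ℝ) :
    (i : ℕ) → Fin (net.width (i + 1)) → ℝ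
  | 0 => fun j => ∑ k, net.W 0 j k * x k
  | i + 1 => fun j => ∑ k, net.W (i + 1) j k * max 0 (net.layer x i k - net.v (i + 1) k)

/-- The real-valued function computed by a ReLU network. -/
def ReLUNet.eval {d : ℕ} (net : ReLUNet d) (x : Fin d → ℝ) : ℝ :=
  net.layer (fun j => x (Fin.cast net.h0 j)) net.L (Fin.cast net.hL.symm 0)

/-- The class `F^NN_d(G, N, S, B, Fb)` of ReLU networks with depth `≤ G`, widths `≤ N`,
at most `S` nonzero parameters, parameter magnitudes `≤ B`, and uniform norm on the cube
`≤ Fb`. -/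
def FNN (d : ℕ) (G N : ℝ) (S : ℝ≥0∞) (B : ℝ) (Fb : ℝ≥0∞) : Set ((Fin d → ℝ) → ℝ) :=
  {f | ∃ net : ReLUNet d,
    (∀ x, f x = net.eval x) ∧
    (net.L : ℝ) ≤ G ∧
    (∀ i ≤ net.L + 1, (net.width i : ℝ) ≤ N) ∧
    ((∑ i ∈ Finset.range (net.L + 1),
        (Nat.card {p : Fin (net.width (i + 1)) × Fin (net.width i) // net.W i p.1 p.2 ≠ 0}
          : ℝ≥0∞)) +
      ∑ i ∈ Finset.range net.L,
        (Nat.card {j : Fin (net.width (i + 1)) // net.v (i + 1) j ≠ 0} : ℝ≥0∞)) ≤ S ∧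
    (∀ i ≤ net.L, ∀ j k, |net.W i j k| ≤ B) ∧
    (∀ i, 1 ≤ i → i ≤ net.L → ∀ j, |net.v i j| ≤ B) ∧
    ∀ x ∈ cube d, ENNReal.ofReal |f x| ≤ Fb}

/-! ## Kullback–Leibler divergence -/

open Classical in
/-- The Kullback–Leibler divergence. -/
def KL {X : Type*} [MeasurableSpace X] (P Q : Measure X) : ℝ≥0∞ :=
  if P ≪ Q ∧ Integrable (fun x => Real.log (P.rnDeriv Q x).toReal) P then
    ENNReal.ofReal (∫ x, Real.log (P.rnDeriv Q x).toReal ∂P)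
  else ∞

/-- The exponent `e / (dstar/(s+1) + (1 + 1/(s+1))·e)` of the minimax rate, for noise
exponent `s ∈ [0,∞]` (equal to `1` when `s = ∞`). -/
def rateExp (dstar : ℕ) (e : ℝ) (s : ℝ≥0∞) : ℝ :=
  if s = ∞ then 1
  else e / ((dstar : ℝ) / (s.toReal + 1) + (1 + 1 / (s.toReal + 1)) * e)

/-! ## The law of an i.i.d. sample -/

lemma measurable_finSnoc {α : Type*} [MeasurableSpace α] (n : ℕ) :
    Measurable fun x : (Fin n → α) × α => (Fin.snoc x.1 x.2 : Fin (n + 1) → α) := by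
  refine measurable_pi_lambda _ fun i => ?_
  refine Fin.lastCases ?_ (fun j => ?_) i
  · simpa using measurable_snd
  · simpa [Function.comp_def] using
      (measurable_pi_apply j).comp (measurable_fst (α := Fin n → α) (β := α))

lemma iid_eq_pi {α : Type*} [MeasurableSpace α] (μ : Measure α) [IsProbabilityMeasure μ] :
    ∀ n : ℕ, iid μ n = Measure.pi fun _ : Fin n => μ
  | 0 => by
    refine Measure.pi_eq (fun s hs => ?_) |>.symm
    simp [iid]
  | n + 1 => by
    refine Measure.pi_eq (fun s hs => ?_) |>.symm
    have ih := iid_eq_pi μ n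
    have hk : Measurable fun p : Fin n → α =>
        μ.map fun a => (Fin.snoc p a : Fin (n + 1) → α) := by
      refine Measure.measurable_of_measurable_coe _ fun t ht => ?_
      have : ∀ p : Fin n → α, (μ.map fun a => (Fin.snoc p a : Fin (n + 1) → α)) t =
          μ (Prod.mk p ⁻¹' ((fun x : (Fin n → α) × α =>
            (Fin.snoc x.1 x.2 : Fin (n + 1) → α)) ⁻¹' t)) := fun p =>
        Measure.map_apply ((measurable_finSnoc n).comp measurable_prodMk_left) ht
      simp_rw [this]
      exact measurable_measure_prodMk_left (measurable_finSnoc n ht)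
    rw [iid, Measure.bind_apply (MeasurableSet.univ_pi hs) hk.aemeasurable, ih]
    have key : ∀ p : Fin n → α,
        (μ.map fun a => (Fin.snoc p a : Fin (n + 1) → α)) (univ.pi s) =
        (univ.pi fun i : Fin n => s i.castSucc).indicator (fun _ => μ (s (Fin.last n))) p := by
      intro p
      have hp' : Measurable fun a => (Fin.snoc p a : Fin (n + 1) → α) :=
        (measurable_finSnoc n).comp measurable_prodMk_left
      rw [Measure.map_apply hp' (MeasurableSet.univ_pi hs)]
      by_cases hp : p ∈ univ.pi fun i : Fin n => s i.castSucc
      · rw [indicator_of_mem hp]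
        congr 1
        ext a
        simp only [mem_preimage, mem_univ_pi, Fin.forall_fin_succ']
        simp only [mem_univ_pi] at hp
        simp [hp]
      · rw [indicator_of_notMem hp]
        convert measure_empty (μ := μ)
        ext a
        simp only [mem_preimage, mem_univ_pi, Fin.forall_fin_succ', mem_empty_iff_false, iff_false]
        simp only [mem_univ_pi] at hp
        simp [hp]
    simp_rw [key]
    rw [lintegral_indicator (MeasurableSet.univ_pi fun i => hs _)]
    simp [Measure.pi_pi, Fin.prod_univ_castSucc, mul_comm]

/-! ## Integration against the joint law -/

lemma measurable_jointKernel {d : ℕ} {η : (Fin d → ℝ) → ℝ} (hη : Measurable η) :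
    Measurable fun x : Fin d → ℝ =>
      ENNReal.ofReal (η x) • Measure.dirac (x, (1 : ℝ)) +
      ENNReal.ofReal (1 - η x) • Measure.dirac (x, (-1 : ℝ)) := by
  refine Measure.measurable_of_measurable_coe _ fun t ht => ?_
  simp only [Measure.add_apply, Measure.smul_apply, smul_eq_mul, Measure.dirac_apply' _ ht]
  have h1 : Measurable fun x : Fin d → ℝ => t.indicator (1 : (Fin d → ℝ) × ℝ → ℝ≥0∞) (x, (1 : ℝ)) :=
    (measurable_one.indicator ht).comp measurable_prodMk_right
  have h2 : Measurable fun x : Fin d → ℝ => t.indicator (1 : (Fin d → ℝ) × ℝ → ℝ≥0∞) (x, (-1 : ℝ)) :=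
    (measurable_one.indicator ht).comp measurable_prodMk_right
  fun_prop

lemma lintegral_jointMeasure {d : ℕ} (D : DataDist d) {f : (Fin d → ℝ) × ℝ → ℝ≥0∞}
    (hf : Measurable f) :
    ∫⁻ z, f z ∂D.P = ∫⁻ x, (ENNReal.ofReal (D.η x) * f (x, 1) +
      ENNReal.ofReal (1 - D.η x) * f (x, -1)) ∂D.Q := by
  rw [DataDist.P, jointMeasure,
    Measure.lintegral_bind (measurable_jointKernel D.η_meas).aemeasurable hf.aemeasurable]
  refine lintegral_congr fun x => ?_
  rw [lintegral_add_measure, lintegral_smul_measure, lintegral_smul_measure,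
    lintegral_dirac' _ hf, lintegral_dirac' _ hf]
  rfl

instance DataDist.isProbabilityMeasure_Q {d : ℕ} (D : DataDist d) :
    IsProbabilityMeasure D.Q := D.Q_prob

instance DataDist.isProbabilityMeasure_P {d : ℕ} (D : DataDist d) :
    IsProbabilityMeasure D.P := by
  constructor
  have h := lintegral_jointMeasure D (f := fun _ => 1) measurable_const
  rw [lintegral_one] at h
  rw [h]
  have : ∀ x, ENNReal.ofReal (D.η x) * 1 + ENNReal.ofReal (1 - D.η x) * 1 = 1 := by
    intro x
    have := D.η_mem x
    rw [mul_one, mul_one, ← ENNReal.ofReal_add this.1 (by linarith [this.2])]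
    simp
  simp_rw [this]
  simp

/-- A property holds almost surely under `D.P` if it holds for both labels almost surely
under the marginal. -/
lemma ae_P_of_ae_Q {d : ℕ} (D : DataDist d) {p : (Fin d → ℝ) × ℝ → Prop}
    (hp : ∀ᵐ x ∂D.Q, p (x, 1) ∧ p (x, -1)) : ∀ᵐ z ∂D.P, p z := by
  obtain ⟨t, ht, htm, ht0⟩ := exists_measurable_superset_of_null (ae_iff.1 hp)
  have hm : MeasurableSet ((Prod.fst ⁻¹' t) ∪ (Prod.snd ⁻¹' ({1, -1} : Set ℝ))ᶜ :
      Set ((Fin d → ℝ) × ℝ)) :=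
    (measurable_fst htm).union
      (measurable_snd ((measurableSet_singleton _).insert _)).compl
  have h0 : D.P ((Prod.fst ⁻¹' t) ∪ (Prod.snd ⁻¹' ({1, -1} : Set ℝ))ᶜ) = 0 := by
    rw [← lintegral_indicator_one hm, lintegral_jointMeasure D (measurable_one.indicator hm),
      lintegral_eq_zero_iff' ?_]
    · have : ∀ᵐ x ∂D.Q, x ∉ t := by rw [ae_iff]; simpa using ht0
      filter_upwards [this] with x hx
      simp [indicator, hx]
    · have h1 : Measurable fun x : Fin d → ℝ => (((Prod.fst ⁻¹' t) ∪
          (Prod.snd ⁻¹' ({1, -1} : Set ℝ))ᶜ).indicator (1 : (Fin d → ℝ) × ℝ → ℝ≥0∞)) (x, (1 : ℝ)) :=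
        (measurable_one.indicator hm).comp measurable_prodMk_right
      have h2 : Measurable fun x : Fin d → ℝ => (((Prod.fst ⁻¹' t) ∪
          (Prod.snd ⁻¹' ({1, -1} : Set ℝ))ᶜ).indicator (1 : (Fin d → ℝ) × ℝ → ℝ≥0∞)) (x, (-1 : ℝ)) :=
        (measurable_one.indicator hm).comp measurable_prodMk_right
      have := D.η_meas
      fun_prop
  rw [ae_iff]
  refine measure_mono_null ?_ h0
  rintro ⟨x, y⟩ hz
  by_contra hcon
  simp only [mem_union, mem_preimage, mem_compl_iff, not_or, not_not] at hcon
  have hx : p (x, 1) ∧ p (x, -1) := by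
    by_contra hx
    exact hcon.1 (ht hx)
  rcases hcon.2 with h | h
  · exact hz (by rw [h]; exact hx.1)
  · exact hz (by rw [h]; exact hx.2)

/-- Integration of a bounded function against the joint law. -/
lemma integral_jointMeasure {d : ℕ} (D : DataDist d) {f : (Fin d → ℝ) × ℝ → ℝ}
    (hf : Measurable f) {C : ℝ} (hC : ∀ z, |f z| ≤ C) :
    ∫ z, f z ∂D.P = ∫ x, (D.η x * f (x, 1) + (1 - D.η x) * f (x, -1)) ∂D.Q := by
  have hη := D.η_meas
  have hf1 : Measurable fun x : Fin d → ℝ => f (x, 1) := hf.comp measurable_prodMk_right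
  have hf2 : Measurable fun x : Fin d → ℝ => f (x, -1) := hf.comp measurable_prodMk_right
  have hC0 : 0 ≤ C := (abs_nonneg _).trans (hC (0, 0))
  have hInt : Integrable f D.P :=
    Integrable.of_bound hf.aestronglyMeasurable C (ae_of_all _ fun z => by
      simpa using hC z)
  have hInt' : Integrable (fun x => D.η x * f (x, 1) + (1 - D.η x) * f (x, -1)) D.Q := by
    refine Integrable.of_bound (by fun_prop) C (ae_of_all _ fun x => ?_)
    have h := D.η_mem x
    rw [Real.norm_eq_abs, abs_le]
    have h1 := abs_le.1 (hC (x, 1))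
    have h2 := abs_le.1 (hC (x, -1))
    constructor <;> nlinarith [h.1, h.2]
  have hshift : ∀ g : (Fin d → ℝ) × ℝ → ℝ, Measurable g → (∀ z, 0 ≤ g z) →
      ∫ z, g z ∂D.P = ∫ x, (D.η x * g (x, 1) + (1 - D.η x) * g (x, -1)) ∂D.Q := by
    intro g hg h0
    have hg1 : Measurable fun x : Fin d → ℝ => g (x, 1) := hg.comp measurable_prodMk_right
    have hg2 : Measurable fun x : Fin d → ℝ => g (x, -1) := hg.comp measurable_prodMk_right
    rw [integral_eq_lintegral_of_nonneg_ae (ae_of_all _ h0) hg.aestronglyMeasurable,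
      integral_eq_lintegral_of_nonneg_ae (ae_of_all _ fun x => ?_)
        (by fun_prop), lintegral_jointMeasure D (by fun_prop)]
    · congr 1
      refine lintegral_congr fun x => ?_
      have h := D.η_mem x
      rw [ENNReal.ofReal_add (mul_nonneg h.1 (h0 _)) (mul_nonneg (by linarith [h.2]) (h0 _)),
        ENNReal.ofReal_mul h.1, ENNReal.ofReal_mul (by linarith [h.2])]
    · have h := D.η_mem x
      exact add_nonneg (mul_nonneg h.1 (h0 _)) (mul_nonneg (by linarith [h.2]) (h0 _))
  have h := hshift (fun z => f z + C) (hf.add_const C)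
    (fun z => by linarith [(abs_le.1 (hC z)).1])
  rw [integral_add hInt (integrable_const _)] at h
  have e : ∀ x, D.η x * (f (x, 1) + C) + (1 - D.η x) * (f (x, -1) + C) =
      (D.η x * f (x, 1) + (1 - D.η x) * f (x, -1)) + C := fun x => by ring
  simp_rw [e] at h
  rw [integral_add hInt' (integrable_const _)] at h
  simpa using h

/-! ## Pointwise facts about the sign, the truncation and the hinge loss -/

lemma measurable_sgn : Measurable sgn :=
  Measurable.ite measurableSet_Ici measurable_const measurable_const

lemma sgn_eq_or (t : ℝ) : sgn t = 1 ∨ sgn t = -1 := by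
  unfold sgn; split_ifs <;> simp

lemma abs_trunc_one_le (t : ℝ) : |trunc 1 t| ≤ 1 := by
  unfold trunc
  rw [abs_le]
  constructor
  · exact le_min (by norm_num) (le_max_left _ _)
  · exact min_le_left _ _

lemma abs_trunc_sub_trunc_le (F s t : ℝ) : |trunc F s - trunc F t| ≤ |s - t| := by
  unfold trunc
  refine (abs_min_sub_min_le_max _ _ _ _).trans ?_
  simp only [sub_self, abs_zero]
  refine max_le (abs_nonneg _) ((abs_max_sub_max_le_max _ _ _ _).trans ?_)
  simp

lemma measurable_trunc (F : ℝ) : Measurable (trunc F) :=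
  measurable_const.min (measurable_const.max measurable_id)

lemma hinge_eq_one_sub {t : ℝ} (ht : t ≤ 1) : hinge t = 1 - t :=
  max_eq_right (by linarith)

lemma hinge_trunc_le {y : ℝ} (hy : y = 1 ∨ y = -1) (t : ℝ) :
    hinge (y * trunc 1 t) ≤ hinge (y * t) := by
  unfold hinge trunc
  rcases hy with rfl | rfl
  · rcases le_total (-1) t with h1 | h1 <;> rcases le_total 1 t with h2 | h2 <;>
      rcases le_total 0 (1 - t) with h3 | h3 <;> simp [h1, h2, h3] <;> linarith
  · rcases le_total (-1) t with h1 | h1 <;> rcases le_total 1 t with h2 | h2 <;>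
      rcases le_total 0 (1 + t) with h3 | h3 <;> simp [h1, h2, h3] <;> linarith

/-- The excess 0-1 loss is dominated by the excess hinge loss of the truncated predictor. -/
lemma mul_sgn_sub_sgn_le (a t : ℝ) :
    a * (sgn a - sgn t) ≤ 2 * (a * (sgn a - trunc 1 t)) := by
  unfold sgn trunc
  split_ifs with h1 h2 h2
  · have : min 1 (max (-1) t) ≤ 1 := min_le_left _ _
    nlinarith
  · have : min 1 (max (-1) t) ≤ 0 := (min_le_right _ _).trans (max_le (by norm_num) (by linarith))
    nlinarith
  · have : 0 ≤ min 1 (max (-1) t) := le_min (by norm_num) (h2.trans (le_max_right _ _))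
    nlinarith
  · have : -1 ≤ min 1 (max (-1) t) := le_min (by norm_num) (le_max_left _ _)
    nlinarith

lemma mul_sgn_self (a : ℝ) : a * sgn a = |a| := by
  unfold sgn
  split_ifs with h
  · rw [abs_of_nonneg h, mul_one]
  · rw [abs_of_neg (by linarith)]; ring

lemma abs_mul_sgn_sub {a g : ℝ} (hg : |g| ≤ 1) : a * (sgn a - g) = |a| * |sgn a - g| := by
  have := abs_le.1 hg
  unfold sgn
  split_ifs with h
  · rw [abs_of_nonneg h, abs_of_nonneg (by linarith)]
  · rw [abs_of_neg (by linarith), abs_of_nonpos (by linarith)]; ring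

/-! ## The 0-1 risk -/

/-- The Bayes classifier. -/
def DataDist.bayes {d : ℕ} (D : DataDist d) (x : Fin d → ℝ) : ℝ := sgn (2 * D.η x - 1)

lemma DataDist.measurable_bayes {d : ℕ} (D : DataDist d) : Measurable D.bayes :=
  measurable_sgn.comp ((D.η_meas.const_mul 2).sub_const 1)

lemma DataDist.abs_bayes {d : ℕ} (D : DataDist d) (x : Fin d → ℝ) : |D.bayes x| = 1 := by
  rcases sgn_eq_or (2 * D.η x - 1) with h | h <;> simp [DataDist.bayes, h]

lemma DataDist.abs_two_mul_sub_one_le {d : ℕ} (D : DataDist d) (x : Fin d → ℝ) :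
    |2 * D.η x - 1| ≤ 1 := by
  have h := D.η_mem x
  rw [abs_le]
  constructor <;> linarith [h.1, h.2]

/-- The excess hinge risk of a `[-1, 1]`-valued predictor. -/
def DataDist.hingeExcess {d : ℕ} (D : DataDist d) (g : (Fin d → ℝ) → ℝ) : ℝ :=
  ∫ x, (2 * D.η x - 1) * (D.bayes x - g x) ∂D.Q

lemma DataDist.integrable_margin_mul {d : ℕ} (D : DataDist d) {g : (Fin d → ℝ) → ℝ}
    (hg : Measurable g) {C : ℝ} (hC : ∀ x, |g x| ≤ C) :
    Integrable (fun x => (2 * D.η x - 1) * g x) D.Q := by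
  have := D.η_meas
  refine Integrable.of_bound (by fun_prop) C (ae_of_all _ fun x => ?_)
  rw [norm_mul]
  calc _ ≤ 1 * C := mul_le_mul (D.abs_two_mul_sub_one_le x) (hC x) (abs_nonneg _) zero_le_one
    _ = C := one_mul C

lemma risk01_eq {d : ℕ} (D : DataDist d) {f : (Fin d → ℝ) → ℝ} (hf : Measurable f) :
    risk01 D.P f = (1 - ∫ x, (2 * D.η x - 1) * sgn (f x) ∂D.Q) / 2 := by
  have hm : MeasurableSet {p : (Fin d → ℝ) × ℝ | sgn (f p.1) ≠ p.2} :=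
    (measurableSet_eq_fun ((measurable_sgn.comp hf).comp measurable_fst) measurable_snd).compl
  have hInt : Integrable (fun x => (2 * D.η x - 1) * sgn (f x)) D.Q :=
    D.integrable_margin_mul (measurable_sgn.comp hf) (C := 1) (fun x => by
      rcases sgn_eq_or (f x) with h | h <;> simp [h])
  have h1 : risk01 D.P f =
      ∫ z, ({p : (Fin d → ℝ) × ℝ | sgn (f p.1) ≠ p.2}.indicator (1 : _ × ℝ → ℝ)) z ∂D.P := by
    rw [integral_indicator_one hm]; rfl
  rw [h1, integral_jointMeasure D (measurable_one.indicator hm) (C := 1) (fun z => by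
    by_cases hz : z ∈ {p : (Fin d → ℝ) × ℝ | sgn (f p.1) ≠ p.2} <;> simp [hz])]
  have e : ∀ x, D.η x * ({p : (Fin d → ℝ) × ℝ | sgn (f p.1) ≠ p.2}.indicator
        (1 : _ × ℝ → ℝ)) (x, 1) + (1 - D.η x) *
        ({p : (Fin d → ℝ) × ℝ | sgn (f p.1) ≠ p.2}.indicator (1 : _ × ℝ → ℝ)) (x, -1) =
      2⁻¹ - 2⁻¹ * ((2 * D.η x - 1) * sgn (f x)) := by
    intro x
    rcases sgn_eq_or (f x) with h | h <;> simp [h, indicator] <;> norm_num <;> ring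
  simp_rw [e]
  rw [integral_sub (integrable_const _) (hInt.const_mul _), integral_const_mul]
  simp
  ring

lemma excess01_le_hingeExcess {d : ℕ} (D : DataDist d) {f : (Fin d → ℝ) → ℝ}
    (hf : Measurable f) :
    excess01 D.P f ≤ D.hingeExcess fun x => trunc 1 (f x) := by
  have hsgn : ∀ t, |sgn t| ≤ 1 := fun t => by rcases sgn_eq_or t with h | h <;> simp [h]
  have hb := D.integrable_margin_mul D.measurable_bayes (C := 1) (fun x => (D.abs_bayes x).le)
  have hf' : Integrable (fun x => (2 * D.η x - 1) * sgn (f x)) D.Q :=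
    D.integrable_margin_mul (measurable_sgn.comp hf) (C := 1) (fun x => hsgn _)
  have ht : Integrable (fun x => (2 * D.η x - 1) * trunc 1 (f x)) D.Q :=
    D.integrable_margin_mul ((measurable_trunc 1).comp hf) (C := 1)
    (fun x => abs_trunc_one_le _)
  have hbayes : (1 - ∫ x, (2 * D.η x - 1) * D.bayes x ∂D.Q) / 2 ≤ bayes01 D.P := by
    have : Nonempty {g : (Fin d → ℝ) → ℝ // Measurable g} := ⟨⟨f, hf⟩⟩
    refine le_ciInf fun g => ?_
    rw [risk01_eq D g.2]
    have : ∫ x, (2 * D.η x - 1) * sgn (g.1 x) ∂D.Q ≤ ∫ x, (2 * D.η x - 1) * D.bayes x ∂D.Q := by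
      refine integral_mono (D.integrable_margin_mul (measurable_sgn.comp g.2) (C := 1)
        (fun x => hsgn _)) hb fun x => ?_
      simp only [DataDist.bayes, mul_sgn_self]
      refine (le_abs_self _).trans ?_
      rw [abs_mul]
      exact mul_le_of_le_one_right (abs_nonneg _) (hsgn _)
    linarith
  have hmain : ∫ x, (2 * D.η x - 1) * D.bayes x ∂D.Q - ∫ x, (2 * D.η x - 1) * sgn (f x) ∂D.Q ≤
      2 * D.hingeExcess fun x => trunc 1 (f x) := by
    rw [DataDist.hingeExcess, ← integral_const_mul, ← integral_sub hb hf']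
    refine integral_mono (hb.sub hf') ?_ fun x => ?_
    · refine Integrable.const_mul ?_ 2
      simp only [mul_sub]
      exact hb.sub ht
    · have := mul_sgn_sub_sgn_le (2 * D.η x - 1) (f x)
      simp only [DataDist.bayes]
      linarith
  rw [excess01, risk01_eq D hf]
  linarith

/-! ## Bernstein-type exponential moments -/

/-- Under the margin condition the excess hinge loss of a `[-1, 1]`-valued predictor has an
exponential moment governed by its mean. -/
lemma lintegral_exp_excess_le {d : ℕ} (D : DataDist d) {t : ℝ} (ht0 : 0 < t) (ht1 : t ≤ 1)
    (hmargin : ∀ᵐ x ∂D.Q, t ≤ |2 * D.η x - 1|) {g : (Fin d → ℝ) → ℝ} (hg : Measurable g)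
    (hg1 : ∀ x, |g x| ≤ 1) :
    ∫⁻ z, ENNReal.ofReal (Real.exp (-(t / 4) * (z.2 * (D.bayes z.1 - g z.1)))) ∂D.P ≤
      ENNReal.ofReal (Real.exp (-(t / 8) * D.hingeExcess g)) := by
  have hη := D.η_meas
  have hbm := D.measurable_bayes
  have hdiff : ∀ x, |D.bayes x - g x| ≤ 2 := fun x =>
    (abs_sub _ _).trans (by linarith [(D.abs_bayes x).le, hg1 x])
  have hexp : ∀ u : ℝ, |u| ≤ 1 → Real.exp u ≤ 1 + u + u ^ 2 := fun u hu => by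
    have := (abs_le.1 (Real.abs_exp_sub_one_sub_id_le hu)).2
    linarith
  rw [lintegral_jointMeasure D (by fun_prop)]
  have hi : Integrable (fun x => (2 * D.η x - 1) * (D.bayes x - g x)) D.Q :=
    D.integrable_margin_mul (hbm.sub hg) hdiff
  have hpt : ∀ᵐ x ∂D.Q, ENNReal.ofReal (D.η x) *
        ENNReal.ofReal (Real.exp (-(t / 4) * (1 * (D.bayes x - g x)))) +
      ENNReal.ofReal (1 - D.η x) *
        ENNReal.ofReal (Real.exp (-(t / 4) * (-1 * (D.bayes x - g x)))) ≤
      ENNReal.ofReal (1 - t / 8 * ((2 * D.η x - 1) * (D.bayes x - g x))) := by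
    filter_upwards [hmargin] with x hx
    have h := D.η_mem x
    have h1 : 0 ≤ 1 - D.η x := by linarith [h.2]
    rw [← ENNReal.ofReal_mul h.1, ← ENNReal.ofReal_mul h1,
      ← ENNReal.ofReal_add (mul_nonneg h.1 (Real.exp_nonneg _))
        (mul_nonneg h1 (Real.exp_nonneg _))]
    refine ENNReal.ofReal_le_ofReal ?_
    have hm : (2 * D.η x - 1) * (D.bayes x - g x) = |2 * D.η x - 1| * |D.bayes x - g x| :=
      abs_mul_sgn_sub (hg1 x)
    set u := D.bayes x - g x with hu
    have hu2 := hdiff x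
    rw [← hu] at hu2
    have hu' := abs_le.1 hu2
    have e1 := hexp (-(t / 4) * (1 * u)) (by rw [abs_le]; constructor <;> nlinarith)
    have e2 := hexp (-(t / 4) * (-1 * u)) (by rw [abs_le]; constructor <;> nlinarith)
    have k1 := mul_le_mul_of_nonneg_left e1 h.1
    have k2 := mul_le_mul_of_nonneg_left e2 h1
    have hsq : t * u ^ 2 ≤ 2 * ((2 * D.η x - 1) * u) := by
      rw [hm, ← sq_abs]
      have := abs_nonneg u
      calc t * |u| ^ 2 = (t * |u|) * |u| := by ring
        _ ≤ (|2 * D.η x - 1| * |u|) * 2 := by gcongr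
        _ = 2 * (|2 * D.η x - 1| * |u|) := by ring
    have hsq2 : t * (t * u ^ 2) ≤ t * (2 * ((2 * D.η x - 1) * u)) :=
      mul_le_mul_of_nonneg_left hsq ht0.le
    nlinarith
  refine (lintegral_mono_ae hpt).trans ?_
  have hi' : Integrable (fun x => 1 - t / 8 * ((2 * D.η x - 1) * (D.bayes x - g x))) D.Q :=
    (integrable_const _).sub (hi.const_mul _)
  rw [← ofReal_integral_eq_lintegral_ofReal hi'
    (ae_of_all _ fun x => ?_)]
  · refine ENNReal.ofReal_le_ofReal ?_
    rw [integral_sub (integrable_const _) (hi.const_mul _), integral_const_mul]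
    have := Real.add_one_le_exp (-(t / 8) * D.hingeExcess g)
    simp only [integral_const, probReal_univ, smul_eq_mul, one_mul]
    rw [DataDist.hingeExcess] at this ⊢
    linarith
  · have h2 : |(2 * D.η x - 1) * (D.bayes x - g x)| ≤ 1 * 2 := by
      rw [abs_mul]
      exact mul_le_mul (D.abs_two_mul_sub_one_le x) (hdiff x) (abs_nonneg _) zero_le_one
    have := (abs_le.1 h2).2
    simp only [Pi.zero_apply]
    nlinarith

lemma ae_mem_cube {d : ℕ} (D : DataDist d) : ∀ᵐ x ∂D.Q, x ∈ cube d := by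
  have hm : MeasurableSet (cube d) := MeasurableSet.univ_pi fun _ => measurableSet_Icc
  exact (prob_compl_eq_zero_iff hm).2 D.Q_cube

lemma ae_iid_of_ae {α : Type*} [MeasurableSpace α] (μ : Measure α) [IsProbabilityMeasure μ]
    (n : ℕ) {p : α → Prop} (hp : ∀ᵐ a ∂μ, p a) : ∀ᵐ ω ∂iid μ n, ∀ i, p (ω i) := by
  rw [iid_eq_pi, Filter.eventually_all]
  intro i
  exact (Measure.quasiMeasurePreserving_eval (μ := fun _ : Fin n => μ) i).ae hp

/-- The exponential moment of the empirical excess hinge loss over a sample. -/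
lemma lintegral_iid_exp_le {d : ℕ} (D : DataDist d) {t : ℝ} (ht0 : 0 < t) (ht1 : t ≤ 1)
    (hmargin : ∀ᵐ x ∂D.Q, t ≤ |2 * D.η x - 1|) {g : (Fin d → ℝ) → ℝ} (hg : Measurable g)
    (hg1 : ∀ x, |g x| ≤ 1) (n : ℕ) :
    ∫⁻ ω, ENNReal.ofReal (Real.exp (t / 4 * (n * D.hingeExcess g / 2 -
      ∑ i, (ω i).2 * (D.bayes (ω i).1 - g (ω i).1)))) ∂iid D.P n ≤ 1 := by
  have hbm := D.measurable_bayes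
  have e : ∀ ω : Fin n → (Fin d → ℝ) × ℝ,
      ENNReal.ofReal (Real.exp (t / 4 * (n * D.hingeExcess g / 2 -
        ∑ i, (ω i).2 * (D.bayes (ω i).1 - g (ω i).1)))) =
      ENNReal.ofReal (Real.exp (t / 8 * D.hingeExcess g)) ^ n *
        ∏ i, ENNReal.ofReal (Real.exp (-(t / 4) * ((ω i).2 * (D.bayes (ω i).1 - g (ω i).1)))) := by
    intro ω
    rw [← ENNReal.ofReal_prod_of_nonneg (fun i _ => Real.exp_nonneg _), ← Real.exp_sum,
      ← ENNReal.ofReal_pow (Real.exp_nonneg _), ← Real.exp_nat_mul,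
      ← ENNReal.ofReal_mul (Real.exp_nonneg _), ← Real.exp_add, ← Finset.mul_sum]
    congr 2
    ring
  simp_rw [e]
  have hmeas : Measurable fun z : (Fin d → ℝ) × ℝ =>
      ENNReal.ofReal (Real.exp (-(t / 4) * (z.2 * (D.bayes z.1 - g z.1)))) := by fun_prop
  have hprod := ProbabilityTheory.lintegral_prod_eq_prod_lintegral_of_indepFun
    (μ := Measure.pi fun _ : Fin n => D.P) Finset.univ _
    (ProbabilityTheory.iIndepFun_pi fun _ => hmeas.aemeasurable)
    (fun i => hmeas.comp (measurable_pi_apply i))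
  have hmeas' : Measurable fun ω : Fin n → (Fin d → ℝ) × ℝ => ∏ i, ENNReal.ofReal
      (Real.exp (-(t / 4) * ((ω i).2 * (D.bayes (ω i).1 - g (ω i).1)))) :=
    Finset.measurable_fun_prod _ fun i _ => hmeas.comp (measurable_pi_apply i)
  have heval : ∀ i : Fin n, ∫⁻ ω, ENNReal.ofReal
      (Real.exp (-(t / 4) * ((ω i).2 * (D.bayes (ω i).1 - g (ω i).1))))
        ∂Measure.pi (fun _ : Fin n => D.P) =
      ∫⁻ z, ENNReal.ofReal (Real.exp (-(t / 4) * (z.2 * (D.bayes z.1 - g z.1)))) ∂D.P := fun i =>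
    (measurePreserving_eval (fun _ : Fin n => D.P) i).lintegral_comp hmeas
  simp_rw [heval] at hprod
  rw [lintegral_const_mul _ hmeas', iid_eq_pi, hprod]
  simp only [Finset.prod_const, Finset.card_univ, Fintype.card_fin]
  rw [← mul_pow]
  refine pow_le_one' ?_ n
  refine (mul_le_mul_right (lintegral_exp_excess_le D ht0 ht1 hmargin hg hg1) _).trans ?_
  rw [← ENNReal.ofReal_mul (Real.exp_nonneg _), ← Real.exp_add]
  simp

/-- Oracle inequality: an estimator whose empirical hinge risk does not exceed that of a
function agreeing with the Bayes classifier has expected excess 0-1 risk controlled by the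
logarithm of the size of a finite cover. -/
theorem expectedExcess01_le {d : ℕ} (D : DataDist d) {t : ℝ} (ht0 : 0 < t) (ht1 : t ≤ 1)
    (hmargin : ∀ᵐ x ∂D.Q, t ≤ |2 * D.η x - 1|) {f₀ : (Fin d → ℝ) → ℝ}
    (hf₀ : ∀ᵐ x ∂D.Q, f₀ x = D.bayes x) {J : Type*} [Fintype J] [Nonempty J]
    {c : J → (Fin d → ℝ) → ℝ} (hc : ∀ j, Measurable (c j)) {n : ℕ} (hn : 0 < n)
    {A : Estimator d n} (hA : A.Meas)
    (hrisk : ∀ ω, ∑ i, hinge ((ω i).2 * A ω (ω i).1) ≤ ∑ i, hinge ((ω i).2 * f₀ (ω i).1))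
    (hcover : ∀ ω, ∃ j, ∀ x ∈ cube d, |A ω x - c j x| ≤ 1 / n) :
    expectedExcess01 D.P A ≤ 3 / n + 8 / (n * t) * Real.log (Fintype.card J) := by
  have hn' : (0 : ℝ) < n := Nat.cast_pos.2 hn
  have hbm := D.measurable_bayes
  have hprob : IsProbabilityMeasure (iid D.P n) := by rw [iid_eq_pi]; infer_instance
  set g : J → (Fin d → ℝ) → ℝ := fun j x => trunc 1 (c j x) with hgdef
  have hg : ∀ j, Measurable (g j) := fun j => (measurable_trunc 1).comp (hc j)
  have hg1 : ∀ j x, |g j x| ≤ 1 := fun j x => abs_trunc_one_le _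
  set X : J → (Fin n → (Fin d → ℝ) × ℝ) → ℝ := fun j ω =>
    t / 4 * (n * D.hingeExcess (g j) / 2 -
      ∑ i, (ω i).2 * (D.bayes (ω i).1 - g j (ω i).1)) with hX
  have hXm : ∀ j, Measurable (X j) := fun j => by
    have := hg j
    refine Measurable.const_mul (measurable_const.sub (Finset.measurable_fun_sum _ fun i _ => ?_)) _
    have h : Measurable fun z : (Fin d → ℝ) × ℝ => z.2 * (D.bayes z.1 - g j z.1) := by fun_prop
    exact h.comp (measurable_pi_apply i)
  have hXle : ∀ j, ∫⁻ ω, ENNReal.ofReal (Real.exp (X j ω)) ∂iid D.P n ≤ 1 := fun j =>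
    lintegral_iid_exp_le D ht0 ht1 hmargin (hg j) (hg1 j) n
  have hXint : ∀ j, Integrable (fun ω => Real.exp (X j ω)) (iid D.P n) := fun j => by
    refine ⟨(hXm j).exp.aestronglyMeasurable, ?_⟩
    rw [hasFiniteIntegral_iff_ofReal (ae_of_all _ fun ω => Real.exp_nonneg _)]
    exact (hXle j).trans_lt one_lt_top
  have hXint1 : ∀ j, ∫ ω, Real.exp (X j ω) ∂iid D.P n ≤ 1 := fun j => by
    rw [integral_eq_lintegral_of_nonneg_ae (ae_of_all _ fun ω => Real.exp_nonneg _)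
      (hXm j).exp.aestronglyMeasurable]
    exact ENNReal.toReal_le_of_le_ofReal zero_le_one (by simpa using hXle j)
  set m : ℝ := (Fintype.card J : ℝ) with hm
  have hm0 : 0 < m := Nat.cast_pos.2 Fintype.card_pos
  have hgood : ∀ᵐ z ∂D.P, z.1 ∈ cube d ∧ (z.2 = 1 ∨ z.2 = -1) ∧ f₀ z.1 = D.bayes z.1 := by
    refine ae_P_of_ae_Q D ?_
    filter_upwards [ae_mem_cube D, hf₀] with x hx hx'
    simp [hx, hx']
  have hpt : ∀ᵐ ω ∂iid D.P n, excess01 D.P (A ω) ≤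
      3 / n + 8 / (n * t) * (Real.log m - 1 + m⁻¹ * ∑ j, Real.exp (X j ω)) := by
    filter_upwards [ae_iid_of_ae D.P n hgood] with ω hω
    have hAm : Measurable (A ω) := hA.comp measurable_prodMk_left
    obtain ⟨j, hj⟩ := hcover ω
    have hclose : ∀ x ∈ cube d, |trunc 1 (A ω x) - g j x| ≤ 1 / n := fun x hx =>
      (abs_trunc_sub_trunc_le _ _ _).trans (hj x hx)
    have h1 : D.hingeExcess (fun x => trunc 1 (A ω x)) ≤ D.hingeExcess (g j) + 1 / n := by
      have i1 : Integrable (fun x => (2 * D.η x - 1) * (D.bayes x - trunc 1 (A ω x))) D.Q :=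
        D.integrable_margin_mul (hbm.sub ((measurable_trunc 1).comp hAm)) (C := 2)
        (fun x => (abs_sub _ _).trans (by
          linarith [abs_trunc_one_le (A ω x), D.abs_bayes x]))
      have i2 : Integrable (fun x => (2 * D.η x - 1) * (D.bayes x - g j x)) D.Q :=
        D.integrable_margin_mul (hbm.sub (hg j)) (C := 2)
        (fun x => (abs_sub _ _).trans (by linarith [hg1 j x, D.abs_bayes x]))
      have e : D.hingeExcess (g j) + 1 / n =
          ∫ x, ((2 * D.η x - 1) * (D.bayes x - g j x) + 1 / n) ∂D.Q := by
        rw [DataDist.hingeExcess]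
        refine Eq.trans ?_ (integral_add i2 (integrable_const _)).symm
        simp
      rw [e, DataDist.hingeExcess]
      refine integral_mono_ae i1 (i2.add (integrable_const _)) ?_
      filter_upwards [ae_mem_cube D] with x hx
      have h2 : |(2 * D.η x - 1) * (g j x - trunc 1 (A ω x))| ≤ 1 * (1 / n) := by
        rw [abs_mul, abs_sub_comm (g j x)]
        exact mul_le_mul (D.abs_two_mul_sub_one_le x) (hclose x hx) (abs_nonneg _) zero_le_one
      have h3 := (abs_le.1 h2).2
      change _ ≤ (2 * D.η x - 1) * (D.bayes x - g j x) + 1 / n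
      linarith
    have h2 : ∑ i, (ω i).2 * (D.bayes (ω i).1 - g j (ω i).1) ≤ 1 := by
      have hterm : ∀ i, (ω i).2 * (D.bayes (ω i).1 - g j (ω i).1) ≤
          hinge ((ω i).2 * A ω (ω i).1) - hinge ((ω i).2 * f₀ (ω i).1) + 1 / n := by
        intro i
        obtain ⟨hx, hy, hf⟩ := hω i
        have k1 := hinge_trunc_le hy (A ω (ω i).1)
        have hy1 : |(ω i).2| = 1 := by rcases hy with h | h <;> simp [h]
        have hmul : ∀ s : ℝ, |s| ≤ 1 → (ω i).2 * s ≤ 1 := fun s hs => by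
          refine (le_abs_self _).trans ?_
          rw [abs_mul, hy1, one_mul]; exact hs
        rw [hinge_eq_one_sub (hmul _ (abs_trunc_one_le _))] at k1
        rw [hf, hinge_eq_one_sub (hmul _ (D.abs_bayes _).le)]
        have k2 : (ω i).2 * (trunc 1 (A ω (ω i).1) - g j (ω i).1) ≤ 1 / n := by
          refine (le_abs_self _).trans ?_
          rw [abs_mul, hy1, one_mul]
          exact hclose _ hx
        linarith
      refine (Finset.sum_le_sum fun i _ => hterm i).trans ?_
      rw [Finset.sum_add_distrib, Finset.sum_sub_distrib]
      have := hrisk ω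
      simp only [Finset.sum_const, Finset.card_univ, Fintype.card_fin, nsmul_eq_mul]
      rw [mul_one_div_cancel hn'.ne']
      linarith
    have h3 : X j ω ≤ Real.log m - 1 + m⁻¹ * ∑ k, Real.exp (X k ω) := by
      have k1 := Real.add_one_le_exp (X j ω - Real.log m)
      rw [Real.exp_sub, Real.exp_log hm0] at k1
      have k2 : Real.exp (X j ω) ≤ ∑ k, Real.exp (X k ω) :=
        Finset.single_le_sum (f := fun k => Real.exp (X k ω)) (fun k _ => Real.exp_nonneg _)
          (Finset.mem_univ j)
      have k3 : Real.exp (X j ω) / m ≤ m⁻¹ * ∑ k, Real.exp (X k ω) := by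
        rw [div_eq_inv_mul]
        exact mul_le_mul_of_nonneg_left k2 (inv_nonneg.2 hm0.le)
      linarith
    have h4 : D.hingeExcess (g j) ≤ 8 / (n * t) * X j ω + 2 / n := by
      have : 8 / (n * t) * X j ω =
          D.hingeExcess (g j) - 2 / n * ∑ i, (ω i).2 * (D.bayes (ω i).1 - g j (ω i).1) := by
        simp only [hX]
        field_simp
        ring
      rw [this]
      have := mul_le_mul_of_nonneg_left h2 (by positivity : (0 : ℝ) ≤ 2 / n)
      linarith
    have h5 := mul_le_mul_of_nonneg_left h3 (by positivity : (0 : ℝ) ≤ 8 / (n * t))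
    have h6 := excess01_le_hingeExcess D hAm
    have h7 : (3 : ℝ) / n = 2 / n + 1 / n := by ring
    linarith
  have hlog : 0 ≤ Real.log m := Real.log_natCast_nonneg _
  by_cases hInt : Integrable (fun ω => excess01 D.P (A ω)) (iid D.P n)
  · have hsum : Integrable (fun ω => ∑ j, Real.exp (X j ω)) (iid D.P n) :=
      integrable_finsetSum _ fun j _ => hXint j
    have hi1 : Integrable (fun ω => Real.log m - 1 + m⁻¹ * ∑ j, Real.exp (X j ω))
        (iid D.P n) := (integrable_const _).add (hsum.const_mul _)
    refine (integral_mono_ae hInt ((integrable_const _).add (hi1.const_mul _)) hpt).trans ?_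
    refine (integral_add (integrable_const _) (hi1.const_mul _)).trans_le ?_
    rw [integral_const_mul, integral_add (integrable_const _) (hsum.const_mul _),
      integral_const_mul, integral_finsetSum _ fun j _ => hXint j]
    simp only [integral_const, probReal_univ, smul_eq_mul, one_mul]
    have hs : ∑ j, ∫ ω, Real.exp (X j ω) ∂iid D.P n ≤ m := by
      refine (Finset.sum_le_sum fun j _ => hXint1 j).trans ?_
      simp [hm]
    have : m⁻¹ * ∑ j, ∫ ω, Real.exp (X j ω) ∂iid D.P n ≤ 1 := by
      rw [inv_mul_le_iff₀ hm0]; linarith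
    have hpos : 0 ≤ 8 / (n * t) := by positivity
    gcongr
    linarith
  · rw [expectedExcess01, integral_undef hInt]
    positivity

/-! ## Layers of networks with parameters indexed by natural numbers -/

/-- The output of the `i`-th layer, for parameters given on all of `ℕ`. -/
def rawLayer (w : ℕ → ℕ) (W : ℕ → ℕ → ℕ → ℝ) (v : ℕ → ℕ → ℝ) (x : ℕ → ℝ) : ℕ → ℕ → ℝ
  | 0 => fun j => ∑ k ∈ Finset.range (w 0), W 0 j k * x k
  | i + 1 => fun j => ∑ k ∈ Finset.range (w (i + 1)),
      W (i + 1) j k * max 0 (rawLayer w W v x i k - v (i + 1) k)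

/-- Extension of a vector by zero. -/
def extend {d : ℕ} (x : Fin d → ℝ) (k : ℕ) : ℝ := if h : k < d then x ⟨k, h⟩ else 0

lemma extend_val {d : ℕ} (x : Fin d → ℝ) (k : Fin d) : extend x k = x k := by
  simp [extend]

lemma measurable_extend {d : ℕ} (k : ℕ) : Measurable fun x : Fin d → ℝ => extend x k := by
  unfold extend
  split_ifs with h
  · exact measurable_pi_apply _
  · exact measurable_const

lemma measurable_rawLayer {d : ℕ} (w : ℕ → ℕ) (W : ℕ → ℕ → ℕ → ℝ) (v : ℕ → ℕ → ℝ) :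
    ∀ i j, Measurable fun x : Fin d → ℝ => rawLayer w W v (extend x) i j
  | 0, _ => Finset.measurable_fun_sum _ fun k _ => (measurable_extend k).const_mul _
  | i + 1, _ => Finset.measurable_fun_sum _ fun k _ =>
      (measurable_const.max ((measurable_rawLayer w W v i k).sub_const _)).const_mul _

lemma abs_extend_le {d : ℕ} {x : Fin d → ℝ} (hx : x ∈ cube d) (k : ℕ) : |extend x k| ≤ 1 := by
  unfold extend
  split_ifs with h
  · have := hx ⟨k, h⟩ (mem_univ _)
    rw [abs_of_nonneg this.1]
    exact this.2
  · simp

lemma sum_fin_eq_sum_range_of_le {w M : ℕ} (h : w ≤ M) (f : Fin w → ℝ) (F : ℕ → ℝ)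
    (hF : ∀ k : Fin w, F k = f k) (h0 : ∀ k, w ≤ k → F k = 0) :
    ∑ k, f k = ∑ k ∈ Finset.range M, F k := by
  rw [← Finset.sum_subset (Finset.range_mono h) (fun k _ hk => h0 k (by simpa using hk)),
    Finset.sum_range]
  exact Finset.sum_congr rfl fun k _ => (hF k).symm

/-! ## Every bounded network is a padded network of constant width -/

lemma exists_rawLayer_eq {d : ℕ} (net : ReLUNet d) {M : ℕ} {B : ℝ} (hB : 0 ≤ B)
    (hM : ∀ i ≤ net.L + 1, net.width i ≤ M)
    (hW : ∀ i ≤ net.L, ∀ j k, |net.W i j k| ≤ B)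
    (hv : ∀ i, 1 ≤ i → i ≤ net.L → ∀ j, |net.v i j| ≤ B) :
    ∃ (W : ℕ → ℕ → ℕ → ℝ) (v : ℕ → ℕ → ℝ), (∀ i j k, |W i j k| ≤ B) ∧ (∀ i j, |v i j| ≤ B) ∧
      ∀ x, net.eval x = rawLayer (fun _ => M) W v (extend x) net.L 0 := by
  classical
  set W : ℕ → ℕ → ℕ → ℝ := fun i j k =>
    if h : i ≤ net.L ∧ j < net.width (i + 1) ∧ k < net.width i then
      net.W i ⟨j, h.2.1⟩ ⟨k, h.2.2⟩ else 0 with hWdef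
  set v : ℕ → ℕ → ℝ := fun i j =>
    if h : 1 ≤ i ∧ i ≤ net.L ∧ j < net.width i then net.v i ⟨j, h.2.2⟩ else 0 with hvdef
  refine ⟨W, v, ?_, ?_, ?_⟩
  · intro i j k
    simp only [hWdef]
    split_ifs with h
    · exact hW i h.1 _ _
    · simpa using hB
  · intro i j
    simp only [hvdef]
    split_ifs with h
    · exact hv i h.1 h.2.1 _
    · simpa using hB
  · intro x
    have key : ∀ i ≤ net.L, ∀ j : Fin (net.width (i + 1)),
        net.layer (fun j => x (Fin.cast net.h0 j)) i j =
          rawLayer (fun _ => M) W v (extend x) i j := by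
      intro i
      induction i with
      | zero =>
        intro _ j
        refine sum_fin_eq_sum_range_of_le (hM 0 (by omega)) _ _ (fun k => ?_) fun k hk => ?_
        · have hk : (k : ℕ) < d := by have := k.2; have := net.h0; omega
          simp [hWdef, extend, hk, Fin.cast]
        · simp [hWdef, not_lt.2 hk]
      | succ i ih =>
        intro hi j
        refine sum_fin_eq_sum_range_of_le (hM (i + 1) (by omega)) _ _ (fun k => ?_) fun k hk => ?_
        · rw [← ih (by omega) k]
          simp [hWdef, hvdef, hi]
        · simp [hWdef, not_lt.2 hk]
    have := key net.L le_rfl (Fin.cast net.hL.symm 0)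
    simpa [ReLUNet.eval] using this

/-! ## Perturbation of the parameters -/

section Perturbation

variable {M L : ℕ} {W W' : ℕ → ℕ → ℕ → ℝ} {v v' : ℕ → ℕ → ℝ} {x : ℕ → ℝ} {B δ : ℝ}

lemma abs_sum_range_le {F : ℕ → ℝ} {c : ℝ} (h : ∀ k < M, |F k| ≤ c) :
    |∑ k ∈ Finset.range M, F k| ≤ M * c := by
  refine (Finset.abs_sum_le_sum_abs _ _).trans ?_
  refine (Finset.sum_le_sum fun k hk => h k (Finset.mem_range.1 hk)).trans ?_
  simp

lemma abs_rawLayer_le (hM : 1 ≤ M) (hB : 1 ≤ B) (hx : ∀ k, |x k| ≤ 1)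
    (hW : ∀ i ≤ L, ∀ j < M, ∀ k < M, |W i j k| ≤ B)
    (hv : ∀ i ≤ L, ∀ j < M, |v i j| ≤ B) :
    ∀ i ≤ L, ∀ j < M, |rawLayer (fun _ => M) W v x i j| ≤ (4 * M * B) ^ (i + 1) := by
  have hM' : (1 : ℝ) ≤ M := by exact_mod_cast hM
  have hMB : 1 ≤ M * B := one_le_mul_of_one_le_of_one_le hM' hB
  intro i
  induction i with
  | zero =>
    intro hi j hj
    have : |rawLayer (fun _ => M) W v x 0 j| ≤ M * (B * 1) := by
      refine abs_sum_range_le fun k hk => ?_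
      rw [abs_mul]
      exact mul_le_mul (hW 0 hi j hj k hk) (hx k) (abs_nonneg _) (by linarith)
    simp only [zero_add, pow_one]
    linarith
  | succ i ih =>
    intro hi j hj
    set R := (4 * M * B) ^ (i + 1) with hR
    have hBR : B ≤ R := by
      have : B ≤ 4 * M * B := by nlinarith
      exact this.trans (le_self_pow₀ (by linarith) (by omega))
    have : |rawLayer (fun _ => M) W v x (i + 1) j| ≤ M * (B * (R + B)) := by
      refine abs_sum_range_le fun k hk => ?_
      rw [abs_mul]
      refine mul_le_mul (hW _ hi j hj k hk) ?_ (abs_nonneg _) (by linarith)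
      have h1 := abs_le.1 (ih (by omega) k hk)
      have h2 := abs_le.1 (hv _ hi k hk)
      rw [abs_of_nonneg (le_max_left _ _)]
      exact max_le (by linarith) (by linarith)
    have e : (4 * M * B) ^ (i + 1 + 1) = R * (4 * M * B) := pow_succ _ _
    rw [e]
    have hMB' : 0 ≤ M * B := by linarith
    have : M * B * (R + B) ≤ M * B * (2 * R) := mul_le_mul_of_nonneg_left (by linarith) hMB'
    nlinarith

lemma abs_rawLayer_sub_le (hM : 1 ≤ M) (hB : 1 ≤ B) (hx : ∀ k, |x k| ≤ 1) (hδ : 0 ≤ δ)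
    (hW : ∀ i ≤ L, ∀ j < M, ∀ k < M, |W i j k| ≤ B)
    (hv : ∀ i ≤ L, ∀ j < M, |v i j| ≤ B)
    (hW' : ∀ i ≤ L, ∀ j < M, ∀ k < M, |W' i j k| ≤ B)
    (hWW : ∀ i ≤ L, ∀ j < M, ∀ k < M, |W i j k - W' i j k| ≤ δ)
    (hvv : ∀ i ≤ L, ∀ j < M, |v i j - v' i j| ≤ δ) :
    ∀ i ≤ L, ∀ j < M, |rawLayer (fun _ => M) W v x i j - rawLayer (fun _ => M) W' v' x i j| ≤
      δ * (4 * M * B) ^ (i + 1) := by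
  have hM' : (1 : ℝ) ≤ M := by exact_mod_cast hM
  have hMB : 1 ≤ M * B := one_le_mul_of_one_le_of_one_le hM' hB
  intro i
  induction i with
  | zero =>
    intro hi j hj
    have : |rawLayer (fun _ => M) W v x 0 j - rawLayer (fun _ => M) W' v' x 0 j| ≤
        M * (δ * 1) := by
      simp only [rawLayer]
      rw [← Finset.sum_sub_distrib]
      refine abs_sum_range_le fun k hk => ?_
      rw [← sub_mul, abs_mul]
      exact mul_le_mul (hWW 0 hi j hj k hk) (hx k) (abs_nonneg _) hδ
    have h2 : M * δ ≤ M * δ * B := le_mul_of_one_le_right (by positivity) hB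
    have h3 : 0 ≤ M * δ * B := by positivity
    simp only [zero_add, pow_one]
    linarith
  | succ i ih =>
    intro hi j hj
    set R := (4 * M * B) ^ (i + 1) with hR
    have hR1 : 1 ≤ R := one_le_pow₀ (by linarith)
    have hBR : B ≤ R := by
      have : B ≤ 4 * M * B := by nlinarith
      exact this.trans (le_self_pow₀ (by linarith) (by omega))
    have hterm : |rawLayer (fun _ => M) W v x (i + 1) j -
        rawLayer (fun _ => M) W' v' x (i + 1) j| ≤ M * (δ * (R + B) + B * (δ * R + δ)) := by
      simp only [rawLayer]
      rw [← Finset.sum_sub_distrib]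
      refine abs_sum_range_le fun k hk => ?_
      set p := rawLayer (fun _ => M) W v x i k - v (i + 1) k
      set p' := rawLayer (fun _ => M) W' v' x i k - v' (i + 1) k
      have e : W (i + 1) j k * max 0 p - W' (i + 1) j k * max 0 p' =
          (W (i + 1) j k - W' (i + 1) j k) * max 0 p +
            W' (i + 1) j k * (max 0 p - max 0 p') := by ring
      rw [e]
      refine (abs_add_le _ _).trans ?_
      rw [abs_mul, abs_mul]
      have h1 := abs_le.1 (abs_rawLayer_le hM hB hx hW hv i (by omega) k hk)
      have h2 := abs_le.1 (hv _ hi k hk)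
      have hp : |max 0 p| ≤ R + B := by
        rw [abs_of_nonneg (le_max_left _ _)]
        exact max_le (by linarith) (by linarith)
      have hpp : |max 0 p - max 0 p'| ≤ δ * R + δ := by
        refine (abs_max_sub_max_le_max 0 p 0 p').trans ?_
        refine max_le (by simp; positivity) ?_
        have h3 := ih (by omega) k hk
        have h4 := hvv _ hi k hk
        have e2 : p - p' = (rawLayer (fun _ => M) W v x i k - rawLayer (fun _ => M) W' v' x i k) -
          (v (i + 1) k - v' (i + 1) k) := by ring
        rw [e2]
        exact (abs_sub _ _).trans (add_le_add h3 h4)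
      exact add_le_add
        (mul_le_mul (hWW _ hi j hj k hk) hp (abs_nonneg _) hδ)
        (mul_le_mul (hW' _ hi j hj k hk) hpp (abs_nonneg _) (by linarith))
    refine hterm.trans ?_
    have e : (4 * M * B) ^ (i + 1 + 1) = R * (4 * M * B) := pow_succ _ _
    rw [e]
    have k1 : δ * (R + B) ≤ 2 * (B * (δ * R)) := by
      have : δ * (R + B) ≤ δ * (2 * R) := mul_le_mul_of_nonneg_left (by linarith) hδ
      have h2 : δ * R ≤ B * (δ * R) := le_mul_of_one_le_left (by positivity) hB
      linarith
    have k2 : B * (δ * R + δ) ≤ 2 * (B * (δ * R)) := by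
      have : δ ≤ δ * R := le_mul_of_one_le_right hδ hR1
      have : B * δ ≤ B * (δ * R) := mul_le_mul_of_nonneg_left this (by linarith)
      linarith
    have : M * (δ * (R + B) + B * (δ * R + δ)) ≤ M * (4 * (B * (δ * R))) :=
      mul_le_mul_of_nonneg_left (by linarith) (by positivity)
    linarith

end Perturbation

/-! ## Covering the network class -/

lemma abs_mul_floor_div_sub_le {δ : ℝ} (hδ : 0 < δ) (a : ℝ) : |a - δ * ⌊a / δ⌋| ≤ δ := by
  have h1 := Int.floor_le (a / δ)
  have h2 := Int.lt_floor_add_one (a / δ)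
  have e : a = δ * (a / δ) := by field_simp
  rw [abs_le]
  constructor <;> nlinarith

lemma floor_div_mem_Icc {δ B a : ℝ} (hδ : 0 < δ) (ha : |a| ≤ B) :
    ⌊a / δ⌋ ∈ Finset.Icc (-(⌈B / δ⌉₊ : ℤ)) ⌈B / δ⌉₊ := by
  have h := abs_le.1 ha
  have hk := Nat.le_ceil (B / δ)
  rw [Finset.mem_Icc, Int.le_floor]
  constructor
  · push_cast
    have : -(B / δ) ≤ a / δ := by
      rw [← neg_div]
      gcongr
      exact h.1
    linarith
  · have h1 := Int.floor_le (a / δ)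
    have h2 : a / δ ≤ B / δ := by gcongr; exact h.2
    have : (⌊a / δ⌋ : ℝ) ≤ ((⌈B / δ⌉₊ : ℤ) : ℝ) := by push_cast; linarith
    exact_mod_cast this

/-- Depth and (integer) parameters of a discretised network. -/
abbrev Code (M k : ℕ) : Type :=
  Fin (M + 1) × (Fin (M + 1) × Fin (M + 1) × Fin (M + 1) → Finset.Icc (-(k : ℤ)) k)

/-- The function computed by a discretised network with mesh `δ`. -/
def Code.eval {M k d : ℕ} (δ : ℝ) (q : Code M k) (x : Fin d → ℝ) : ℝ :=
  rawLayer (fun _ => M)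
    (fun i j l => δ * (q.2 (Fin.ofNat _ i, Fin.ofNat _ j, Fin.ofNat _ l) : ℤ))
    (fun i j => δ * (q.2 (Fin.ofNat _ i, Fin.ofNat _ j, Fin.last M) : ℤ)) (extend x) q.1 0

instance {M k : ℕ} : Nonempty (Code M k) :=
  ⟨(0, fun _ => ⟨0, by simp⟩)⟩

lemma card_code (M k : ℕ) :
    Fintype.card (Code M k) = (M + 1) * (2 * k + 1) ^ ((M + 1) * ((M + 1) * (M + 1))) := by
  have h : ((k : ℤ) + 1 + (k : ℤ)).toNat = 2 * k + 1 := by omega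
  simp [h]

lemma exists_code_close {d M : ℕ} {G N B δ : ℝ} {S Fb : ℝ≥0∞} (hM : 1 ≤ M)
    (hGM : ∀ L : ℕ, (L : ℝ) ≤ G → L ≤ M) (hNM : ∀ L : ℕ, (L : ℝ) ≤ N → L ≤ M) (hB : 1 ≤ B)
    (hδ : 0 < δ) (hδ1 : δ ≤ 1) {f : (Fin d → ℝ) → ℝ} (hf : f ∈ FNN d G N S B Fb) :
    ∃ q : Code M ⌈B / δ⌉₊, ∀ x ∈ cube d, |f x - q.eval δ x| ≤ δ * (8 * M * B) ^ (M + 1) := by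
  obtain ⟨net, hfe, hL, hw, -, hW, hv, -⟩ := hf
  have hLM : net.L ≤ M := hGM _ hL
  obtain ⟨W, v, hWB, hvB, heval⟩ := exists_rawLayer_eq net (by linarith)
    (fun i hi => hNM _ (hw i hi)) hW hv
  refine ⟨(⟨net.L, by omega⟩, fun p => if p.2.2 = Fin.last M then
    ⟨⌊v p.1 p.2.1 / δ⌋, floor_div_mem_Icc hδ (hvB _ _)⟩ else
    ⟨⌊W p.1 p.2.1 p.2.2 / δ⌋, floor_div_mem_Icc hδ (hWB _ _ _)⟩), fun x hx => ?_⟩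
  rw [hfe x, heval x, Code.eval]
  have hval : ∀ i ≤ M, ((Fin.ofNat (M + 1) i : Fin (M + 1)) : ℕ) = i := fun i hi => by
    simp [Fin.ofNat, Nat.mod_eq_of_lt (Nat.lt_succ_of_le hi)]
  have hne : ∀ i < M, (Fin.ofNat (M + 1) i : Fin (M + 1)) ≠ Fin.last M := fun i hi h => by
    have := congrArg Fin.val h
    rw [hval i hi.le, Fin.val_last] at this
    omega
  have hclose : ∀ a, |a - δ * ⌊a / δ⌋| ≤ δ := abs_mul_floor_div_sub_le hδ
  have hbd : ∀ a, |a| ≤ B → |δ * (⌊a / δ⌋ : ℝ)| ≤ 2 * B := fun a ha => by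
    have h1 := abs_le.1 (hclose a)
    have h2 := abs_le.1 ha
    rw [abs_le]
    constructor <;> linarith
  have hM' : (1 : ℝ) ≤ M := by exact_mod_cast hM
  have := abs_rawLayer_sub_le (L := net.L) (x := extend x) (B := 2 * B) (δ := δ) (W := W) (v := v)
    hM (by linarith) (abs_extend_le hx) hδ.le
    (fun i _ j _ k _ => (hWB i j k).trans (by linarith))
    (fun i _ j _ => (hvB i j).trans (by linarith))
    (W' := fun i j l => δ * (((if (Fin.ofNat (M + 1) l : Fin (M + 1)) = Fin.last M then
      ⟨⌊v (Fin.ofNat (M + 1) i : Fin (M + 1)) (Fin.ofNat (M + 1) j : Fin (M + 1)) / δ⌋,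
        floor_div_mem_Icc hδ (hvB _ _)⟩ else
      ⟨⌊W (Fin.ofNat (M + 1) i : Fin (M + 1)) (Fin.ofNat (M + 1) j : Fin (M + 1))
        (Fin.ofNat (M + 1) l : Fin (M + 1)) / δ⌋, floor_div_mem_Icc hδ (hWB _ _ _)⟩ :
      Finset.Icc (-(⌈B / δ⌉₊ : ℤ)) ⌈B / δ⌉₊) : ℤ) : ℝ))
    (v' := fun i j => δ * (⌊v (Fin.ofNat (M + 1) i : Fin (M + 1))
      (Fin.ofNat (M + 1) j : Fin (M + 1)) / δ⌋ : ℝ))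
    (fun i hi j hj k hk => by
      simp only [if_neg (hne k hk), hval i (hi.trans hLM), hval j hj.le, hval k hk.le]
      exact hbd _ (hWB _ _ _))
    (fun i hi j hj k hk => by
      simp only [if_neg (hne k hk), hval i (hi.trans hLM), hval j hj.le, hval k hk.le]
      exact hclose _)
    (fun i hi j hj => by
      simp only [hval i (hi.trans hLM), hval j hj.le]
      exact hclose _)
    net.L le_rfl 0 (by omega)
  simp only [if_true] at this ⊢
  refine this.trans ?_
  have hMB : 1 ≤ M * B := one_le_mul_of_one_le_of_one_le hM' hB
  have e : 4 * M * (2 * B) = 8 * M * B := by ring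
  rw [e]
  refine mul_le_mul_of_nonneg_left (pow_le_pow_right₀ (by linarith) (by omega)) hδ.le

/-- Bounded-size networks with polynomially bounded weights admit `1 / n`-covers of polynomial
size in the uniform norm. -/
theorem exists_cover (d : ℕ) {b ν : ℝ} (hb : 1 ≤ b) (hν : 0 ≤ ν) :
    ∃ C : ℝ, 0 < C ∧ ∀ (n : ℕ) (G N B : ℝ) (S Fb : ℝ≥0∞), 2 ≤ n → G ≤ b → N ≤ b → 1 ≤ B →
      B ≤ b * (n : ℝ) ^ ν →
      ∃ (M k : ℕ) (c : Code M k → (Fin d → ℝ) → ℝ), (∀ q, Measurable (c q)) ∧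
        Real.log (Fintype.card (Code M k)) ≤ C * Real.log n ∧
        ∀ f ∈ FNN d G N S B Fb, ∃ q, ∀ x ∈ cube d, |f x - c q x| ≤ 1 / n := by
  set M := ⌊b⌋₊ with hMdef
  have hM : 1 ≤ M := Nat.le_floor (by simpa using hb)
  have hM' : (1 : ℝ) ≤ M := by exact_mod_cast hM
  set p := (M + 1) * ((M + 1) * (M + 1)) with hp
  have hl2 : 0 < Real.log 2 := Real.log_pos (by norm_num)
  set a₀ : ℝ := Real.log (M + 1) + p * (Real.log 5 + Real.log b + (M + 1) * Real.log (8 * M * b))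
    with ha₀
  set a₁ : ℝ := p * (ν + 1 + (M + 1) * ν) with ha₁
  have h8 : 1 ≤ 8 * M * b := by nlinarith
  have ha₀0 : 0 ≤ a₀ := by
    have h1 : 0 ≤ Real.log (M + 1) := Real.log_nonneg (by linarith)
    have h2 : 0 ≤ Real.log 5 := Real.log_nonneg (by norm_num)
    have h3 : 0 ≤ Real.log b := Real.log_nonneg hb
    have h4 : 0 ≤ Real.log (8 * M * b) := Real.log_nonneg h8
    positivity
  have ha₁0 : 0 ≤ a₁ := by positivity
  refine ⟨a₀ / Real.log 2 + a₁ + 1, by positivity, ?_⟩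
  intro n G N B S Fb hn hG hN hB hBn
  have hn2 : (2 : ℝ) ≤ n := by exact_mod_cast hn
  have hn0 : (0 : ℝ) < n := by linarith
  set T : ℝ := 8 * M * B with hT
  have hT1 : 1 ≤ T := by nlinarith
  have hTpow : 1 ≤ T ^ (M + 1) := one_le_pow₀ hT1
  set δ : ℝ := 1 / (n * T ^ (M + 1)) with hδdef
  have hden : 1 ≤ n * T ^ (M + 1) := one_le_mul_of_one_le_of_one_le (by linarith) hTpow
  have hδ : 0 < δ := by positivity
  have hδ1 : δ ≤ 1 := by rw [hδdef, div_le_one (by linarith)]; exact hden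
  refine ⟨M, ⌈B / δ⌉₊, fun q => q.eval δ, fun q => measurable_rawLayer _ _ _ _ _, ?_, ?_⟩
  · rw [card_code]
    push_cast
    have hBδ : B / δ = B * (n * T ^ (M + 1)) := by rw [hδdef]; field_simp
    have hBδ1 : 1 ≤ B / δ := by
      rw [hBδ]; exact one_le_mul_of_one_le_of_one_le hB hden
    have hk : 2 * (⌈B / δ⌉₊ : ℝ) + 1 ≤ 5 * (B * (n * T ^ (M + 1))) := by
      have := (Nat.ceil_lt_add_one (by linarith : 0 ≤ B / δ)).le
      rw [← hBδ]
      linarith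
    have hk0 : (0 : ℝ) < 2 * (⌈B / δ⌉₊ : ℝ) + 1 := by positivity
    have hB0 : 0 < B := by linarith
    have hlogB : Real.log B ≤ Real.log b + ν * Real.log n := by
      refine (Real.log_le_log hB0 hBn).trans_eq ?_
      rw [Real.log_mul (by positivity) (by positivity), Real.log_rpow hn0]
    have hlogT : Real.log T ≤ Real.log (8 * M * b) + ν * Real.log n := by
      have e1 : Real.log T = Real.log (8 * M) + Real.log B := by
        rw [hT, Real.log_mul (by positivity) (by positivity)]
      have e2 : Real.log (8 * M * b) = Real.log (8 * M) + Real.log b := by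
        rw [Real.log_mul (by positivity) (by positivity)]
      linarith
    have hlogk : Real.log (2 * (⌈B / δ⌉₊ : ℝ) + 1) ≤
        (Real.log 5 + Real.log b + (M + 1) * Real.log (8 * M * b)) +
          (ν + 1 + (M + 1) * ν) * Real.log n := by
      refine (Real.log_le_log hk0 hk).trans ?_
      have hT0 : T ^ (M + 1) ≠ 0 := by positivity
      rw [Real.log_mul (by norm_num) (by positivity), Real.log_mul (by positivity) (by positivity),
        Real.log_mul (by positivity) hT0, Real.log_pow]
      push_cast
      have := mul_le_mul_of_nonneg_left hlogT (by positivity : (0 : ℝ) ≤ M + 1)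
      linarith
    rw [Real.log_mul (by positivity) (by positivity), Real.log_pow]
    have h1 := mul_le_mul_of_nonneg_left hlogk (Nat.cast_nonneg p : (0 : ℝ) ≤ p)
    have hlogn : Real.log 2 ≤ Real.log n := Real.log_le_log (by norm_num) hn2
    have h2 : a₀ ≤ a₀ / Real.log 2 * Real.log n := by
      rw [div_mul_eq_mul_div, le_div_iff₀ hl2]
      exact mul_le_mul_of_nonneg_left hlogn ha₀0
    have h3 : Real.log (M + 1) + p * Real.log (2 * (⌈B / δ⌉₊ : ℝ) + 1) ≤
        a₀ + a₁ * Real.log n := by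
      rw [ha₀, ha₁]; linarith
    linarith
  · intro f hf
    obtain ⟨q, hq⟩ := exists_code_close hM (fun L hL => Nat.le_floor (hL.trans hG))
      (fun L hL => Nat.le_floor (hL.trans hN)) hB hδ hδ1 hf
    refine ⟨q, fun x hx => (hq x hx).trans_eq ?_⟩
    rw [hδdef, ← hT]
    have : T ^ (M + 1) ≠ 0 := by positivity
    field_simp

/-- `HiddenLayer d w L ι F`: the functions `F j`, `j : ι`, are, on the cube, the activations of
the last hidden layer of a network with `L + 1` hidden layers of widths at most `w`, parameters
bounded by one, and first-layer neurons depending on a single input each. -/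
def HiddenLayer (d w : ℕ) : ℕ → (ι : Type) → [Fintype ι] → (ι → (Fin d → ℝ) → ℝ) → Prop
  | 0, ι, _, F => Fintype.card ι ≤ w ∧ ∃ (k : ι → Fin d) (c v : ι → ℝ),
      (∀ j, |c j| ≤ 1) ∧ (∀ j, |v j| ≤ 1) ∧ ∀ j, ∀ x ∈ cube d, F j x = max 0 (c j * x (k j) - v j)
  | L + 1, ι, _, F => Fintype.card ι ≤ w ∧
      ∃ (κ : Type) (_ : Fintype κ) (H : κ → (Fin d → ℝ) → ℝ), HiddenLayer d w L κ H ∧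
        ∃ (W : ι → κ → ℝ) (v : ι → ℝ), (∀ j k, |W j k| ≤ 1) ∧ (∀ j, |v j| ≤ 1) ∧
          ∀ j, ∀ x ∈ cube d, F j x = max 0 (∑ k, W j k * H k x - v j)

lemma HiddenLayer.mono {d w w' L : ℕ} (hw : w ≤ w') {ι : Type} [Fintype ι]
    {F : ι → (Fin d → ℝ) → ℝ} (h : HiddenLayer d w L ι F) : HiddenLayer d w' L ι F := by
  induction L generalizing ι with
  | zero => exact ⟨h.1.trans hw, h.2⟩
  | succ L ih =>
    obtain ⟨hc, κ, hκ, H, hH, hrest⟩ := h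
    exact ⟨hc.trans hw, κ, hκ, H, ih hH, hrest⟩

lemma HiddenLayer.sum {d w w' L : ℕ} {ι κ : Type} [Fintype ι] [Fintype κ]
    {F : ι → (Fin d → ℝ) → ℝ} {G : κ → (Fin d → ℝ) → ℝ} (hF : HiddenLayer d w L ι F)
    (hG : HiddenLayer d w' L κ G) : HiddenLayer d (w + w') L (ι ⊕ κ) (Sum.elim F G) := by
  induction L generalizing ι κ with
  | zero =>
    obtain ⟨hc, k, c, v, h1, h2, h3⟩ := hF
    obtain ⟨hc', k', c', v', h1', h2', h3'⟩ := hG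
    refine ⟨by simpa using add_le_add hc hc', Sum.elim k k', Sum.elim c c', Sum.elim v v', ?_, ?_, ?_⟩
    · rintro (j | j) <;> simp [h1, h1']
    · rintro (j | j) <;> simp [h2, h2']
    · rintro (j | j) x hx <;> simp [h3 _ x hx, h3' _ x hx]
  | succ L ih =>
    obtain ⟨hc, μ, hμ, H, hH, W, v, h1, h2, h3⟩ := hF
    obtain ⟨hc', μ', hμ', H', hH', W', v', h1', h2', h3'⟩ := hG
    refine ⟨by simpa using add_le_add hc hc', μ ⊕ μ', inferInstance, Sum.elim H H', ih hH hH',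
      Matrix.fromBlocks W 0 0 W', Sum.elim v v', ?_, ?_, ?_⟩
    · rintro (j | j) (k | k) <;> simp [Matrix.fromBlocks, h1, h1']
    · rintro (j | j) <;> simp [h2, h2']
    · rintro (j | j) x hx <;> simp [Matrix.fromBlocks, h3 _ x hx, h3' _ x hx]

/-- `NetFun d L w f`: on the cube, `f` is the output of a network as in `HiddenLayer`. -/
def NetFun (d L w : ℕ) (f : (Fin d → ℝ) → ℝ) : Prop :=
  ∃ (ι : Type) (_ : Fintype ι) (F : ι → (Fin d → ℝ) → ℝ), HiddenLayer d w L ι F ∧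
    ∃ a : ι → ℝ, (∀ j, |a j| ≤ 1) ∧ ∀ x ∈ cube d, f x = ∑ j, a j * F j x

lemma NetFun.congr {d L w : ℕ} {f g : (Fin d → ℝ) → ℝ} (hf : NetFun d L w f)
    (h : ∀ x ∈ cube d, g x = f x) : NetFun d L w g := by
  obtain ⟨ι, hι, F, hF, a, ha, hfa⟩ := hf
  exact ⟨ι, hι, F, hF, a, ha, fun x hx => (h x hx).trans (hfa x hx)⟩

lemma NetFun.mono {d L w w' : ℕ} (hw : w ≤ w') {f : (Fin d → ℝ) → ℝ} (hf : NetFun d L w f) :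
    NetFun d L w' f := by
  obtain ⟨ι, hι, F, hF, ha⟩ := hf
  exact ⟨ι, hι, F, hF.mono hw, ha⟩

lemma NetFun.add {d L w w' : ℕ} {f g : (Fin d → ℝ) → ℝ} (hf : NetFun d L w f)
    (hg : NetFun d L w' g) : NetFun d L (w + w') fun x => f x + g x := by
  obtain ⟨ι, hι, F, hF, a, ha, hfa⟩ := hf
  obtain ⟨κ, hκ, H, hH, c, hc, hgc⟩ := hg
  refine ⟨ι ⊕ κ, inferInstance, Sum.elim F H, hF.sum hH, Sum.elim a c, ?_, fun x hx => ?_⟩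
  · rintro (j | j) <;> simp [ha, hc]
  · simp [hfa x hx, hgc x hx]

lemma NetFun.neg {d L w : ℕ} {f : (Fin d → ℝ) → ℝ} (hf : NetFun d L w f) :
    NetFun d L w fun x => - f x := by
  obtain ⟨ι, hι, F, hF, a, ha, hfa⟩ := hf
  exact ⟨ι, hι, F, hF, fun j => - a j, by simpa using ha, fun x hx => by simp [hfa x hx]⟩

lemma NetFun.relu {d L w : ℕ} {f : (Fin d → ℝ) → ℝ} (hf : NetFun d L w f) :
    NetFun d (L + 1) (w + 1) fun x => max 0 (f x) := by
  obtain ⟨ι, hι, F, hF, a, ha, hfa⟩ := hf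
  refine ⟨Unit, inferInstance, fun _ x => max 0 (f x), ⟨by simp, ι, hι, F, hF.mono (by simp),
    fun _ => a, 0, by simpa using ha, by simp, fun _ x hx => by simp [hfa x hx]⟩, 1, by simp,
    by simp⟩

lemma NetFun.succ_depth {d L w : ℕ} {f : (Fin d → ℝ) → ℝ} (hf : NetFun d L w f) :
    NetFun d (L + 1) (w + 1 + (w + 1)) f := by
  refine (hf.relu.add hf.neg.relu.neg).congr fun x _ => ?_
  rcases le_total 0 (f x) with h | h
  · simp [h]
  · simp [h]

lemma NetFun.le_depth {L L' : ℕ} (hL : L ≤ L') (w : ℕ) :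
    ∃ w', ∀ d f, NetFun d L w f → NetFun d L' w' f := by
  induction L', hL using Nat.le_induction with
  | base => exact ⟨w, fun _ _ h => h⟩
  | succ L' _ ih =>
    obtain ⟨w', h⟩ := ih
    exact ⟨w' + 1 + (w' + 1), fun d f hf => (h d f hf).succ_depth⟩

/-- A family of functions, on cubes of varying dimension, that are computed by networks of
uniformly bounded size. -/
def UniformNet {I : Type} {d : I → ℕ} (F : ∀ i, (Fin (d i) → ℝ) → ℝ) : Prop :=
  ∃ L w : ℕ, ∀ i, NetFun (d i) L w (F i)

section UniformNet

variable {I : Type} {d : I → ℕ} {F G : ∀ i, (Fin (d i) → ℝ) → ℝ}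

lemma UniformNet.congr (hF : UniformNet F) (h : ∀ i, ∀ x ∈ cube (d i), G i x = F i x) :
    UniformNet G := by
  obtain ⟨L, w, hF⟩ := hF
  exact ⟨L, w, fun i => (hF i).congr (h i)⟩

lemma UniformNet.comp {J : Type} (hF : UniformNet F) (φ : J → I) :
    UniformNet (d := fun j => d (φ j)) fun j => F (φ j) := by
  obtain ⟨L, w, hF⟩ := hF
  exact ⟨L, w, fun j => hF (φ j)⟩

lemma UniformNet.neg (hF : UniformNet F) : UniformNet fun i x => - F i x := by
  obtain ⟨L, w, hF⟩ := hF
  exact ⟨L, w, fun i => (hF i).neg⟩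

lemma UniformNet.add (hF : UniformNet F) (hG : UniformNet G) :
    UniformNet fun i x => F i x + G i x := by
  obtain ⟨L, w, hF⟩ := hF
  obtain ⟨L', w', hG⟩ := hG
  obtain ⟨v, hv⟩ := NetFun.le_depth (le_max_left L L') w
  obtain ⟨v', hv'⟩ := NetFun.le_depth (le_max_right L L') w'
  exact ⟨_, _, fun i => (hv _ _ (hF i)).add (hv' _ _ (hG i))⟩

lemma UniformNet.sub (hF : UniformNet F) (hG : UniformNet G) :
    UniformNet fun i x => F i x - G i x :=
  (hF.add hG.neg).congr fun _ _ _ => sub_eq_add_neg _ _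

lemma UniformNet.relu (hF : UniformNet F) : UniformNet fun i x => max 0 (F i x) := by
  obtain ⟨L, w, hF⟩ := hF
  exact ⟨_, _, fun i => (hF i).relu⟩

lemma UniformNet.sup (hF : UniformNet F) (hG : UniformNet G) :
    UniformNet fun i x => max (F i x) (G i x) :=
  (hF.add (hG.sub hF).relu).congr fun i x _ => by
    rw [← max_add_add_left]; simp

lemma UniformNet.absVal (hF : UniformNet F) : UniformNet fun i x => |F i x| :=
  (hF.sup hF.neg).congr fun _ _ _ => rfl

lemma UniformNet.const (hd : ∀ i, 0 < d i) (c : I → ℝ) (hc : ∀ i, |c i| ≤ 1) :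
    UniformNet (d := d) fun i _ => c i := by
  refine ⟨0, 2, fun i => ⟨Bool, inferInstance, fun s _ => max 0 (if s then c i else - c i),
    ⟨by simp, fun _ => ⟨0, hd i⟩, 0, fun s => if s then - c i else c i, by simp, ?_, ?_⟩,
    fun s => if s then 1 else -1, ?_, ?_⟩⟩
  · rintro (_ | _) <;> simp [hc]
  · rintro (_ | _) <;> simp
  · rintro (_ | _) <;> simp
  · intro x _
    rcases le_total 0 (c i) with h | h <;> simp [h]

lemma UniformNet.coord (k : ∀ i, Fin (d i)) : UniformNet fun i x => x (k i) := by
  refine ⟨0, 1, fun i => ⟨Unit, inferInstance, fun _ x => x (k i),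
    ⟨by simp, fun _ => k i, 1, 0, by simp, by simp, ?_⟩, 1, by simp, by simp⟩⟩
  intro _ x hx
  have := (hx (k i) (Set.mem_univ _)).1
  simp [this]

lemma UniformNet.natMul (hd : ∀ i, 0 < d i) (hF : UniformNet F) (n : ℕ) :
    UniformNet fun i x => n * F i x := by
  induction n with
  | zero => exact (UniformNet.const hd (fun _ => 0) (by simp)).congr (by simp)
  | succ n ih => exact (ih.add hF).congr fun i x _ => by push_cast; ring

lemma UniformNet.sum {κ : Type} (hd : ∀ i, 0 < d i) (s : Finset κ)
    {F : κ → ∀ i, (Fin (d i) → ℝ) → ℝ} (hF : ∀ k, UniformNet (F k)) :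
    UniformNet fun i x => ∑ k ∈ s, F k i x := by
  classical
  induction s using Finset.induction_on with
  | empty => exact (UniformNet.const hd (fun _ => 0) (by simp)).congr (by simp)
  | insert k s hk ih =>
    exact ((hF k).add ih).congr fun i x _ => Finset.sum_insert hk

/-- Nonnegative finite maxima of uniform families are uniform families. -/
lemma UniformNet.exists_sup {κ : Type} (hd : ∀ i, 0 < d i) (s : Finset κ)
    {F : κ → ∀ i, (Fin (d i) → ℝ) → ℝ} (hF : ∀ k, UniformNet (F k)) :
    ∃ U : ∀ i, (Fin (d i) → ℝ) → ℝ, UniformNet U ∧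
      (∀ i x, 0 ≤ U i x) ∧ (∀ k ∈ s, ∀ i x, F k i x ≤ U i x) ∧
      ∀ i x, U i x = 0 ∨ ∃ k ∈ s, U i x = F k i x := by
  classical
  induction s using Finset.induction_on with
  | empty =>
    exact ⟨fun _ _ => 0, UniformNet.const hd (fun _ => 0) (by simp), by simp, by simp, by simp⟩
  | insert k s hk ih =>
    obtain ⟨U, hU, h0, hle, heq⟩ := ih
    refine ⟨_, hU.sup (hF k), fun i x => le_max_of_le_left (h0 i x), ?_, fun i x => ?_⟩
    · intro k' hk' i x
      rcases Finset.mem_insert.1 hk' with rfl | hk'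
      · exact le_max_right _ _
      · exact le_max_of_le_left (hle k' hk' i x)
    · rcases max_choice (U i x) (F k i x) with h | h
      · rw [h]
        rcases heq i x with h' | ⟨k', hk', h'⟩
        · exact Or.inl h'
        · exact Or.inr ⟨k', Finset.mem_insert_of_mem hk', h'⟩
      · exact Or.inr ⟨k, Finset.mem_insert_self _ _, h⟩

end UniformNet

/-! ## Realisation of `NetFun` by networks in `FNN` -/

lemma rawLayer_congr {w w' : ℕ → ℕ} {W W' : ℕ → ℕ → ℕ → ℝ} {v v' : ℕ → ℕ → ℝ} (x : ℕ → ℝ) :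
    ∀ {L : ℕ}, (∀ i ≤ L, w i = w' i) → (∀ i ≤ L, W i = W' i) → (∀ i ≤ L, v i = v' i) →
      rawLayer w W v x L = rawLayer w' W' v' x L
  | 0, hw, hW, _ => by simp only [rawLayer, hw 0 le_rfl, hW 0 le_rfl]
  | L + 1, hw, hW, hv => by
    have ih := rawLayer_congr x (L := L) (fun i hi => hw i (by omega)) (fun i hi => hW i (by omega))
      (fun i hi => hv i (by omega))
    simp only [rawLayer, hw _ le_rfl, hW _ le_rfl, hv _ le_rfl, ih]

/-- `RawRep d w L ι g u`: the functions `g j` are the preactivations in layer `L + 1`, and `u j`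
the shifts of that layer, for some parameters indexed by natural numbers, bounded by one. -/
def RawRep (d w L : ℕ) (ι : Type) (g : ι → (Fin d → ℝ) → ℝ) (u : ι → ℝ) : Prop :=
  ∃ (width : ℕ → ℕ) (W : ℕ → ℕ → ℕ → ℝ) (v : ℕ → ℕ → ℝ), width 0 = d ∧
    (∀ i, 1 ≤ i → i ≤ L + 1 → width i ≤ w) ∧ (∀ i j k, |W i j k| ≤ 1) ∧ (∀ i j, |v i j| ≤ 1) ∧
    (∃ κ : ℕ → ℕ, ∀ j k, W 0 j k ≠ 0 → k = κ j) ∧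
    ∃ e : ι ≃ Fin (width (L + 1)), (∀ j, v (L + 1) (e j) = u j) ∧
      ∀ j, ∀ x ∈ cube d, rawLayer width W v (extend x) L (e j) = g j x

/-- Extension of a vector indexed by a finite type along an equivalence with `Fin m`. -/
def extendAlong {ι : Type} {m : ℕ} (e : ι ≃ Fin m) (u : ι → ℝ) (k : ℕ) : ℝ :=
  extend (fun j => u (e.symm j)) k

lemma extendAlong_apply {ι : Type} {m : ℕ} (e : ι ≃ Fin m) (u : ι → ℝ) (j : ι) :
    extendAlong e u (e j) = u j := by
  simp [extendAlong, extend_val]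

lemma abs_extendAlong_le {ι : Type} {m : ℕ} (e : ι ≃ Fin m) {u : ι → ℝ} (hu : ∀ j, |u j| ≤ 1)
    (k : ℕ) : |extendAlong e u k| ≤ 1 := by
  unfold extendAlong extend
  split_ifs
  · exact hu _
  · simp

lemma RawRep.zero {d w : ℕ} {ι : Type} [Fintype ι] (hw : Fintype.card ι ≤ w) (k : ι → Fin d)
    {c u : ι → ℝ} (hc : ∀ j, |c j| ≤ 1) (hu : ∀ j, |u j| ≤ 1) :
    RawRep d w 0 ι (fun j x => c j * x (k j)) u := by
  let e := Fintype.equivFin ι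
  refine ⟨fun i => if i = 0 then d else Fintype.card ι,
    fun _ j l => if (l : ℝ) = extendAlong e (fun j => (k j : ℝ)) j then extendAlong e c j else 0,
    fun _ => extendAlong e u, by simp, ?_, ?_, fun _ => abs_extendAlong_le e hu, ?_, e, ?_, ?_⟩
  · intro i hi _
    dsimp only
    rw [if_neg (by omega)]
    exact hw
  · intro i j l
    dsimp only
    split_ifs
    · exact abs_extendAlong_le e hc j
    · simp
  · refine ⟨fun j => ⌊extendAlong e (fun j => (k j : ℝ)) j⌋₊, fun j l h => ?_⟩
    have : (l : ℝ) = extendAlong e (fun j => (k j : ℝ)) j := by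
      by_contra h'
      simp [h'] at h
    simp [← this]
  · exact extendAlong_apply e u
  · intro j x _
    simp only [rawLayer, if_true, extendAlong_apply, Nat.cast_inj]
    rw [Finset.sum_eq_single (k j : ℕ)]
    · simp [extend_val]
    · intro l _ hl
      simp [hl]
    · intro h
      exact absurd (Finset.mem_range.2 (k j).2) h

lemma RawRep.succ {d w L : ℕ} {ι κ : Type} [Fintype ι] [Fintype κ] {g : κ → (Fin d → ℝ) → ℝ}
    {u : κ → ℝ} (h : RawRep d w L κ g u) (hw : Fintype.card ι ≤ w) {A : ι → κ → ℝ} {u' : ι → ℝ}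
    (hA : ∀ j k, |A j k| ≤ 1) (hu' : ∀ j, |u' j| ≤ 1) :
    RawRep d w (L + 1) ι (fun j x => ∑ k, A j k * max 0 (g k x - u k)) u' := by
  obtain ⟨width, W, v, h0, hwd, hW, hv, ⟨κ₀, hκ⟩, e, he, hg⟩ := h
  have hwid : (Function.update width (L + 2) (Fintype.card ι)) (L + 1 + 1) = Fintype.card ι := by
    simp
  let e' : ι ≃ Fin ((Function.update width (L + 2) (Fintype.card ι)) (L + 1 + 1)) :=
    (Fintype.equivFin ι).trans (finCongr hwid.symm)
  refine ⟨Function.update width (L + 2) (Fintype.card ι),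
    Function.update W (L + 1) fun j k => extendAlong e' (fun j => extendAlong e (A j) k) j,
    Function.update v (L + 2) (extendAlong e' u'), ?_, ?_, ?_, ?_, ?_, e', ?_, ?_⟩
  · rw [Function.update_of_ne (by omega), h0]
  · intro i hi hi'
    rcases eq_or_ne i (L + 2) with rfl | hne
    · simpa using hw
    · rw [Function.update_of_ne hne]
      exact hwd i hi (by omega)
  · intro i j k
    rcases eq_or_ne i (L + 1) with rfl | hne
    · simp only [Function.update_self]
      exact abs_extendAlong_le e' (fun j => abs_extendAlong_le e (hA j) k) j
    · rw [Function.update_of_ne hne]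
      exact hW i j k
  · intro i j
    rcases eq_or_ne i (L + 2) with rfl | hne
    · simp only [Function.update_self]
      exact abs_extendAlong_le e' hu' j
    · rw [Function.update_of_ne hne]
      exact hv i j
  · refine ⟨κ₀, fun j k hne => hκ j k ?_⟩
    rwa [Function.update_of_ne (by omega)] at hne
  · intro j
    rw [Function.update_self, extendAlong_apply]
  · intro j x hx
    have hlow := rawLayer_congr (w := Function.update width (L + 2) (Fintype.card ι)) (w' := width)
      (W := Function.update W (L + 1) fun j k => extendAlong e' (fun j => extendAlong e (A j) k) j)
      (W' := W) (v := Function.update v (L + 2) (extendAlong e' u')) (v' := v) (extend x) (L := L)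
      (fun i hi => Function.update_of_ne (by omega) _ _)
      (fun i hi => Function.update_of_ne (by omega) _ _)
      (fun i hi => Function.update_of_ne (by omega) _ _)
    simp only [rawLayer, hlow]
    rw [Function.update_of_ne (show L + 1 ≠ L + 2 by omega),
      Function.update_of_ne (show L + 1 ≠ L + 2 by omega), Function.update_self, Finset.sum_range,
      ← e.sum_comp]
    simp only [extendAlong_apply, he, hg _ x hx]

lemma HiddenLayer.exists_rawRep {d w L : ℕ} {ι : Type} [Fintype ι] {F : ι → (Fin d → ℝ) → ℝ}
    (h : HiddenLayer d w L ι F) : ∃ g u, RawRep d w L ι g u ∧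
      ∀ j, ∀ x ∈ cube d, F j x = max 0 (g j x - u j) := by
  induction L generalizing ι with
  | zero =>
    obtain ⟨hw, k, c, u, hc, hu, hF⟩ := h
    exact ⟨_, _, RawRep.zero hw k hc hu, hF⟩
  | succ L ih =>
    obtain ⟨hw, κ, hκ, H, hH, A, u', hA, hu', hF⟩ := h
    obtain ⟨g, u, hr, hg⟩ := ih hH
    refine ⟨_, _, hr.succ hw hA hu', fun j x hx => ?_⟩
    rw [hF j x hx]
    simp only [hg _ x hx]

lemma NetFun.exists_rawRep {d w L : ℕ} {f : (Fin d → ℝ) → ℝ} (h : NetFun d L w f) :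
    ∃ g u, RawRep d (w + 1) (L + 1) Unit g u ∧ ∀ x ∈ cube d, f x = g () x := by
  obtain ⟨ι, hι, F, hF, a, ha, hf⟩ := h
  obtain ⟨g, u, hr, hg⟩ := (hF.mono (Nat.le_succ w)).exists_rawRep
  refine ⟨_, 0, hr.succ (by simp) (A := fun _ => a) (fun _ => ha) (by simp), fun x hx => ?_⟩
  simp only [hf x hx, hg _ x hx]

lemma card_nonzero_le {m k : ℕ} (p : Fin m × Fin k → Prop) (κ : ℕ → ℕ)
    (h : ∀ q, p q → (q.2 : ℕ) = κ q.1) : Nat.card {q // p q} ≤ m := by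
  have := Nat.card_le_card_of_injective (fun q : {q // p q} => q.1.1) (by
    rintro ⟨⟨a, b⟩, hq⟩ ⟨⟨a', b'⟩, hq'⟩ (rfl : a = a')
    have : b = b' := Fin.ext ((h _ hq).trans (h _ hq').symm)
    subst this
    rfl)
  simpa using this

lemma RawRep.exists_mem_FNN {d w L : ℕ} {g : Unit → (Fin d → ℝ) → ℝ} {u : Unit → ℝ}
    (h : RawRep d w L Unit g u) {G N B : ℝ} {S : ℝ≥0∞} (hG : (L : ℝ) ≤ G) (hd : (d : ℝ) ≤ N)
    (hN : (w : ℝ) ≤ N) (hB : 1 ≤ B) (hS : (((L + 1) * (w + w * w + w) : ℕ) : ℝ≥0∞) ≤ S) :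
    ∃ f ∈ FNN d G N S B ∞, ∀ x ∈ cube d, f x = g () x := by
  obtain ⟨width, W, v, h0, hwd, hW, hv, ⟨κ, hκ⟩, e, he, hg⟩ := h
  have h1 : width (L + 1) = 1 := by simpa using (Fintype.card_congr e).symm
  let net : ReLUNet d :=
    { L := L, width := width, W := fun i j k => W i j k, v := fun i j => v i j, h0 := h0, hL := h1 }
  have hlayer : ∀ (x : Fin d → ℝ) (i : ℕ) (j : Fin (width (i + 1))),
      net.layer (fun j => x (Fin.cast h0 j)) i j = rawLayer width W v (extend x) i j := by
    intro x i
    induction i with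
    | zero =>
      intro j
      simp only [ReLUNet.layer, rawLayer, Finset.sum_range]
      refine Finset.sum_congr rfl fun k _ => ?_
      rw [show ((k : Fin (width 0)) : ℕ) = (Fin.cast h0 k : ℕ) from rfl, extend_val]
      rfl
    | succ i ih =>
      intro j
      simp only [ReLUNet.layer, rawLayer, Finset.sum_range]
      exact Finset.sum_congr rfl fun k _ => by rw [ih k]
  refine ⟨net.eval, ⟨net, fun _ => rfl, hG, ?_, ?_, fun i _ j k => (hW i j k).trans hB,
    fun i _ _ j => (hv i j).trans hB, by simp⟩, fun x hx => ?_⟩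
  · intro i hi
    rcases Nat.eq_zero_or_pos i with rfl | hi0
    · exact (congrArg (fun m : ℕ => (m : ℝ)) h0).trans_le hd
    · exact le_trans (by exact_mod_cast hwd i hi0 hi) hN
  · refine le_trans ?_ hS
    have hWc : ∀ i ∈ Finset.range (L + 1),
        Nat.card {p : Fin (width (i + 1)) × Fin (width i) // W i p.1 p.2 ≠ 0} ≤ w + w * w := by
      intro i hi
      have hi := Finset.mem_range.1 hi
      have hw1 := hwd (i + 1) (by omega) (by omega)
      rcases Nat.eq_zero_or_pos i with rfl | hi0
      · exact (card_nonzero_le _ κ fun q hq => hκ _ _ hq).trans (hw1.trans (by omega))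
      · refine (Nat.card_le_card_of_injective _ Subtype.val_injective).trans ?_
        simp only [Nat.card_eq_fintype_card, Fintype.card_prod, Fintype.card_fin]
        exact (Nat.mul_le_mul hw1 (hwd i hi0 (by omega))).trans (by omega)
    have hvc : ∀ i ∈ Finset.range L,
        Nat.card {j : Fin (width (i + 1)) // v (i + 1) j ≠ 0} ≤ w := by
      intro i hi
      have hi := Finset.mem_range.1 hi
      refine (Nat.card_le_card_of_injective _ Subtype.val_injective).trans ?_
      simpa using hwd (i + 1) (by omega) (by omega)
    have hs1 := Finset.sum_le_sum hWc
    have hs2 := Finset.sum_le_sum hvc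
    simp only [Finset.sum_const, Finset.card_range, smul_eq_mul] at hs1 hs2
    have := (add_le_add hs1 hs2).trans (show (L + 1) * (w + w * w) + L * w ≤
      (L + 1) * (w + w * w + w) by nlinarith)
    exact_mod_cast this
  · rw [← hg () x hx]
    have : (e () : ℕ) = 0 := by
      have := (e ()).2
      omega
    rw [this]
    exact hlayer x L (Fin.cast h1.symm 0)

lemma UniformNet.exists_size {I : Type} {d : I → ℕ} {F : ∀ i, (Fin (d i) → ℝ) → ℝ}
    (hF : UniformNet F) : ∃ c : ℕ, 0 < c ∧ ∀ (i : I) (G N B : ℝ) (S : ℝ≥0∞), (c : ℝ) ≤ G →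
      (c : ℝ) ≤ N → (d i : ℝ) ≤ N → 1 ≤ B → (c : ℝ≥0∞) ≤ S →
      ∃ f ∈ FNN (d i) G N S B ∞, ∀ x ∈ cube (d i), f x = F i x := by
  obtain ⟨L, w, hF⟩ := hF
  set s := (L + 1 + 1) * (w + 1 + (w + 1) * (w + 1) + (w + 1)) with hs
  refine ⟨s, by positivity, fun i G N B S hG hN hd hB hS => ?_⟩
  obtain ⟨g, u, hr, hg⟩ := (hF i).exists_rawRep
  have hLs : L + 1 ≤ s := by nlinarith
  have hws : w + 1 ≤ s := by nlinarith [Nat.zero_le L, Nat.zero_le ((L + 1) * (w + 1))]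
  obtain ⟨f, hf, hfg⟩ := hr.exists_mem_FNN (G := G) (N := N) (B := B) (S := S)
    (le_trans (by exact_mod_cast hLs) hG) hd (le_trans (by exact_mod_cast hws) hN) hB hS
  exact ⟨f, hf, fun x hx => (hfg x hx).trans (hg x hx).symm⟩

/-! ## Moduli of continuity of the building blocks -/

lemma convex_cubeo (m : ℕ) : Convex ℝ (cubeo m) := convex_pi fun _ _ => convex_Ioo 0 1

lemma isOpen_cubeo (m : ℕ) : IsOpen (cubeo m) := isOpen_set_pi finite_univ fun _ _ => isOpen_Ioo

lemma e2_le {m : ℕ} {x z : Fin m → ℝ} {δ : ℝ} (hδ : 0 ≤ δ) (h : ∀ j, |x j - z j| ≤ δ) :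
    e2 x z ≤ m * δ := by
  have hm : (0 : ℝ) ≤ m := Nat.cast_nonneg m
  refine Real.sqrt_le_iff.2 ⟨by positivity, ?_⟩
  have h1 : ∑ i, (x i - z i) ^ 2 ≤ ∑ _i : Fin m, δ ^ 2 :=
    Finset.sum_le_sum fun i _ => sq_le_sq' (by linarith [neg_abs_le (x i - z i), h i])
      ((le_abs_self _).trans (h i))
  refine h1.trans ?_
  simp only [Finset.sum_const, Finset.card_univ, Fintype.card_fin, nsmul_eq_mul, mul_pow]
  refine mul_le_mul_of_nonneg_right ?_ (by positivity)
  exact_mod_cast Nat.le_self_pow (by norm_num) m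

lemma HolderBall.abs_Dm_le {m : ℕ} {β r : ℝ} (hr : 0 ≤ r) {f : (Fin m → ℝ) → ℝ}
    (hf : f ∈ HolderBall m β r) {u : Fin m → ℕ} (hu : (mord u : ℝ) < β) {x : Fin m → ℝ}
    (hx : x ∈ cubeo m) : |Dm u f x| ≤ r := by
  have h := le_self_add.trans hf.2.2.2
  rw [← ENNReal.ofReal_le_ofReal_iff hr]
  refine le_trans ?_ h
  exact le_iSup₂_of_le u hu (le_iSup₂_of_le (f := fun x _ => ENNReal.ofReal |Dm u f x|) x hx le_rfl)

lemma HolderBall.abs_sub_le_of_le_one {m : ℕ} {β r : ℝ} (hβ : 0 < β) (hβ1 : β ≤ 1) (hr : 0 ≤ r)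
    {f : (Fin m → ℝ) → ℝ} (hf : f ∈ HolderBall m β r) {x z : Fin m → ℝ} (hx : x ∈ cubeo m)
    (hz : z ∈ cubeo m) : |f x - f z| ≤ r * e2 x z ^ β := by
  rcases eq_or_ne x z with rfl | hne
  · have : 0 ≤ e2 x x ^ β := Real.rpow_nonneg (Real.sqrt_nonneg _) _
    simp only [sub_self, abs_zero]
    positivity
  have hceil : ⌈β⌉ = 1 := Int.ceil_eq_iff.2 ⟨by simpa using hβ, by simpa using hβ1⟩
  have he : 0 < e2 x z := by
    obtain ⟨j, hj⟩ := Function.ne_iff.1 hne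
    refine Real.sqrt_pos.2 (Finset.sum_pos' (fun i _ => sq_nonneg _) ⟨j, Finset.mem_univ _, ?_⟩)
    exact sq_pos_of_ne_zero (sub_ne_zero.2 hj)
  have hD : Dm (0 : Fin m → ℕ) f = f := by
    have : idxList (0 : Fin m → ℕ) = [] := by
      simp [idxList, List.flatMap_eq_nil_iff]
    simp [Dm, this, pderivList]
  have h := le_add_self.trans hf.2.2.2
  have h2 : ENNReal.ofReal |Dm 0 f x - Dm 0 f z| /
      ENNReal.ofReal (e2 x z) ^ (β + 1 - (⌈β⌉ : ℝ)) ≤ ENNReal.ofReal r := by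
    refine le_trans ?_ h
    refine le_iSup₂_of_le (0 : Fin m → ℕ) ?_ ?_
    · simp [mord, hceil, hβ]
    · exact le_iSup₂_of_le x hx (le_iSup₂_of_le z hz (le_iSup_of_le hne le_rfl))
  rw [hD, hceil] at h2
  have hexp : β + 1 - ((1 : ℤ) : ℝ) = β := by simp
  rw [hexp, ENNReal.ofReal_rpow_of_pos he] at h2
  have hpos : 0 < e2 x z ^ β := Real.rpow_pos_of_pos he _
  rw [← ENNReal.ofReal_div_of_pos hpos, ENNReal.ofReal_le_ofReal_iff hr, div_le_iff₀ hpos] at h2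
  exact h2

lemma idxList_single {m : ℕ} (j : Fin m) : idxList (Pi.single j 1) = [j] := by
  have h : ∀ l : List (Fin m), (l.flatMap fun i => List.replicate ((Pi.single j 1 : Fin m → ℕ) i) i) =
      List.replicate (l.count j) j := by
    intro l
    induction l with
    | nil => simp
    | cons a l ih =>
      rw [List.flatMap_cons, ih]
      rcases eq_or_ne a j with rfl | hne
      · simp [List.replicate_succ]
      · simp [hne]
  rw [idxList, h, List.count_eq_one_of_mem (List.nodup_finRange m) (List.mem_finRange j)]
  rfl

lemma HolderBall.abs_sub_le_of_one_lt {m : ℕ} {β r : ℝ} (hβ1 : 1 < β) (hr : 0 ≤ r)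
    {f : (Fin m → ℝ) → ℝ} (hf : f ∈ HolderBall m β r) {x z : Fin m → ℝ} (hx : x ∈ cubeo m)
    (hz : z ∈ cubeo m) {δ : ℝ} (hδ : 0 ≤ δ) (hxz : ∀ j, |x j - z j| ≤ δ) :
    |f x - f z| ≤ m * r * δ := by
  have hdiff : ∀ y ∈ cubeo m, DifferentiableAt ℝ f y := fun y hy => by
    refine (hf.2.1.differentiableOn ?_).differentiableAt ((isOpen_cubeo m).mem_nhds hy)
    have : 0 < smoothOrder β := Nat.ceil_pos.2 (by linarith)
    exact_mod_cast this.ne'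
  have hpart : ∀ y ∈ cubeo m, ∀ j, |fderiv ℝ f y (Pi.single j 1)| ≤ r := fun y hy j => by
    have := HolderBall.abs_Dm_le hr hf (u := Pi.single j 1) (by simpa [mord] using hβ1) hy
    simpa only [Dm, idxList_single, pderivList] using this
  have hbound : ∀ y ∈ cubeo m, ‖fderiv ℝ f y‖ ≤ m * r := fun y hy => by
    refine ContinuousLinearMap.opNorm_le_bound _ (by positivity) fun a => ?_
    have ha : a = ∑ j, a j • (Pi.single j (1 : ℝ) : Fin m → ℝ) := pi_eq_sum_univ' a
    rw [ha, map_sum, ← ha]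
    refine (norm_sum_le _ _).trans ((Finset.sum_le_sum (g := fun _ => r * ‖a‖) fun j _ => ?_).trans ?_)
    · rw [map_smul, norm_smul, mul_comm]
      exact mul_le_mul (hpart y hy j) (norm_le_pi_norm a j) (norm_nonneg _) hr
    · simp [mul_assoc]
  have := (convex_cubeo m).norm_image_sub_le_of_norm_fderiv_le hdiff hbound hz hx
  refine this.trans (mul_le_mul_of_nonneg_left ?_ (by positivity))
  exact (pi_norm_le_iff_of_nonneg hδ).2 hxz

lemma HolderBall.exists_modulus_cubeo (m : ℕ) {β r : ℝ} (hβ : 0 < β) (hr : 0 < r) {ε : ℝ}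
    (hε : 0 < ε) : ∃ δ > 0, ∀ f ∈ HolderBall m β r, ∀ x ∈ cubeo m, ∀ z ∈ cubeo m,
      (∀ j, |x j - z j| ≤ δ) → |f x - f z| ≤ ε := by
  rcases le_or_gt β 1 with hβ1 | hβ1
  · refine ⟨(ε / r) ^ β⁻¹ / (m + 1), by positivity, fun f hf x hx z hz hxz => ?_⟩
    refine (HolderBall.abs_sub_le_of_le_one hβ hβ1 hr.le hf hx hz).trans ?_
    have h1 : e2 x z ≤ (ε / r) ^ β⁻¹ := by
      refine (e2_le (by positivity) hxz).trans ?_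
      rw [mul_div_assoc', div_le_iff₀ (by positivity), mul_comm]
      have : 0 ≤ (ε / r) ^ β⁻¹ := by positivity
      nlinarith
    calc r * e2 x z ^ β ≤ r * ((ε / r) ^ β⁻¹) ^ β := by
          gcongr
          exact Real.sqrt_nonneg _
      _ = ε := by
          rw [Real.rpow_inv_rpow (by positivity) hβ.ne']
          field_simp
  · refine ⟨ε / (r * (m + 1)), by positivity, fun f hf x hx z hz hxz => ?_⟩
    refine (HolderBall.abs_sub_le_of_one_lt hβ1 hr.le hf hx hz (by positivity) hxz).trans ?_
    rw [mul_div_assoc', div_le_iff₀ (by positivity)]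
    nlinarith [mul_pos hr hε]

lemma HolderBall.exists_modulus (m : ℕ) {β r : ℝ} (hβ : 0 < β) (hr : 0 < r) {ε : ℝ}
    (hε : 0 < ε) : ∃ δ > 0, ∀ f ∈ HolderBall m β r, ∀ x ∈ cube m, ∀ z ∈ cube m,
      (∀ j, |x j - z j| ≤ δ) → |f x - f z| ≤ ε := by
  obtain ⟨δ, hδ, h⟩ := exists_modulus_cubeo m hβ hr hε
  refine ⟨δ, hδ, fun f hf x hx z hz hxz => ?_⟩
  let p : (Fin m → ℝ) → ℝ → Fin m → ℝ := fun y t j => (1 - t) * y j + t / 2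
  have hp : ∀ y, Continuous (p y) := fun y => by fun_prop
  have hp0 : ∀ y, p y 0 = y := fun y => by ext j; simp [p]
  have hmem : ∀ y ∈ cube m, ∀ t ∈ Ioo (0 : ℝ) 1, p y t ∈ cubeo m := by
    intro y hy t ht j _
    obtain ⟨h0, h1⟩ := hy j (mem_univ _)
    obtain ⟨ht0, ht1⟩ := ht
    constructor
    · have : 0 ≤ (1 - t) * y j := mul_nonneg (by linarith) h0
      simp only [p]; linarith
    · have : (1 - t) * y j ≤ (1 - t) * 1 := mul_le_mul_of_nonneg_left h1 (by linarith)
      simp only [p]; linarith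
  have hsub : cubeo m ⊆ cube m := pi_mono fun _ _ => Ioo_subset_Icc_self
  have hlim : ∀ y ∈ cube m,
      Filter.Tendsto (fun t => f (p y t)) (nhdsWithin 0 (Ioo 0 1)) (nhds (f y)) := by
    intro y hy
    have hc : Filter.Tendsto f (nhdsWithin y (cube m)) (nhds (f y)) := hf.1 y hy
    refine hc.comp (tendsto_nhdsWithin_iff.2 ⟨?_, ?_⟩)
    · have := (hp y).tendsto 0
      rw [hp0] at this
      exact this.mono_left nhdsWithin_le_nhds
    · filter_upwards [self_mem_nhdsWithin] with t ht using hsub (hmem y hy t ht)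
  have : (nhdsWithin (0 : ℝ) (Ioo 0 1)).NeBot := left_nhdsWithin_Ioo_neBot one_pos
  refine le_of_tendsto ((hlim x hx).sub (hlim z hz)).abs ?_
  filter_upwards [self_mem_nhdsWithin] with t ht
  refine h f hf _ (hmem x hx t ht) _ (hmem z hz t ht) fun j => ?_
  have : p x t j - p z t j = (1 - t) * (x j - z j) := by simp only [p]; ring
  rw [this, abs_mul, abs_of_nonneg (by linarith [ht.2])]
  nlinarith [hxz j, abs_nonneg (x j - z j), ht.1, ht.2]

lemma abs_sup'_sub_sup'_le {ι : Type*} {s : Finset ι} (hs : s.Nonempty) {x z : ι → ℝ} {δ : ℝ}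
    (h : ∀ j, |x j - z j| ≤ δ) : |s.sup' hs x - s.sup' hs z| ≤ δ := by
  rw [abs_sub_le_iff]
  constructor <;> rw [sub_le_iff_le_add] <;> refine Finset.sup'_le _ _ fun j hj => ?_
  · have := (abs_le.1 (h j)).2
    linarith [Finset.le_sup' z hj]
  · have := (abs_le.1 (h j)).1
    linarith [Finset.le_sup' x hj]

/-- The building blocks depend on boundedly many coordinates, with a common modulus of
continuity. -/
lemma exists_block_modulus (dmax : ℕ) {dstar : ℕ} (hdstar : 0 < dstar) {β r : ℝ} (hβ : 0 < β)
    (hr : 0 < r) {ε : ℝ} (hε : 0 < ε) : ∃ δ > 0, ∀ m, ∀ f ∈ GH m dstar β r ∪ GM m dmax,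
      ∃ (e : Fin (dstar + dmax) → Fin m) (g : (Fin (dstar + dmax) → ℝ) → ℝ),
        (∀ x ∈ cube m, f x = g fun j => x (e j)) ∧
        ∀ x ∈ cube (dstar + dmax), ∀ z ∈ cube (dstar + dmax),
          (∀ j, |x j - z j| ≤ δ) → |g x - g z| ≤ ε := by
  obtain ⟨δ, hδ, h⟩ := HolderBall.exists_modulus dstar hβ hr hε
  refine ⟨min δ ε, lt_min hδ hε, fun m f hf => ?_⟩
  rcases hf with ⟨e, g, -, hg, hfg⟩ | ⟨I, hI, hcard, hfI⟩
  · refine ⟨Fin.append e fun _ => e ⟨0, hdstar⟩, fun y => g fun j => y (Fin.castAdd dmax j),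
      fun x hx => ?_, fun x hx z hz hxz => ?_⟩
    · simp [hfg x hx]
    · exact h g hg _ (fun j _ => hx _ (mem_univ _)) _ (fun j _ => hz _ (mem_univ _))
        fun j => (hxz _).trans (min_le_left _ _)
  · have : Nonempty (Fin (dstar + dmax)) := ⟨⟨0, by omega⟩⟩
    obtain ⟨i₀, hi₀⟩ := hI
    have hle : I.card ≤ dstar + dmax := by omega
    let e : Fin (dstar + dmax) → Fin m := fun k =>
      if hk : k.1 < I.card then I.equivFin.symm ⟨k, hk⟩ else i₀
    have heI : ∀ k, e k ∈ I := fun k => by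
      simp only [e]
      split_ifs
      · exact Subtype.prop _
      · exact hi₀
    have hsurj : ∀ i ∈ I, ∃ k, e k = i := fun i hi => by
      refine ⟨⟨I.equivFin ⟨i, hi⟩, (I.equivFin ⟨i, hi⟩).2.trans_le hle⟩, ?_⟩
      simp [e]
    refine ⟨e, fun y => Finset.univ.sup' Finset.univ_nonempty y, fun x hx => ?_,
      fun x _ z _ hxz => abs_sup'_sub_sup'_le _ fun j => (hxz j).trans (min_le_right _ _)⟩
    rw [hfI x hx]
    refine le_antisymm (Finset.sup'_le _ _ fun i hi => ?_) (Finset.sup'_le _ _ fun k _ => ?_)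
    · obtain ⟨k, rfl⟩ := hsurj i hi
      exact Finset.le_sup' (fun k => x (e k)) (Finset.mem_univ k)
    · exact Finset.le_sup' x (heI k)

/-! ## Uniform network approximation of compositional functions -/

/-- Clipping to the unit interval. -/
def unitClip (t : ℝ) : ℝ := max 0 (min 1 t)

lemma unitClip_mem (t : ℝ) : unitClip t ∈ Icc (0 : ℝ) 1 :=
  ⟨le_max_left _ _, max_le zero_le_one (min_le_left _ _)⟩

lemma unitClip_of_mem {t : ℝ} (ht : t ∈ Icc (0 : ℝ) 1) : unitClip t = t := by
  simp [unitClip, ht.1, ht.2]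

lemma abs_unitClip_sub_le (s t : ℝ) : |unitClip s - unitClip t| ≤ |s - t| := by
  refine (abs_max_sub_max_le_max _ _ _ _).trans (max_le (by simp) ?_)
  refine (abs_min_sub_min_le_max _ _ _ _).trans (max_le (by simp) le_rfl)

lemma exists_grid_close {D M : ℕ} (hM : 0 < M) {y : Fin D → ℝ} (hy : y ∈ cube D) :
    ∃ p : Fin D → Fin (M + 1), ∀ j, |y j - (p j : ℝ) / M| ≤ 1 / M := by
  have hM' : (0 : ℝ) < M := by exact_mod_cast hM
  have hfl : ∀ j, ⌊M * y j⌋₊ < M + 1 := fun j => by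
    rw [Nat.lt_succ_iff]
    refine Nat.floor_le_of_le ?_
    nlinarith [(hy j (mem_univ _)).2]
  refine ⟨fun j => ⟨⌊M * y j⌋₊, hfl j⟩, fun j => ?_⟩
  have h0 : 0 ≤ M * y j := mul_nonneg hM'.le (hy j (mem_univ _)).1
  have h1 := Nat.floor_le h0
  have h2 := Nat.lt_floor_add_one (M * y j)
  have : y j - (⌊M * y j⌋₊ : ℝ) / M = (M * y j - ⌊M * y j⌋₊) / M := by field_simp
  simp only [this]
  rw [abs_of_nonneg (div_nonneg (by linarith) hM'.le)]
  gcongr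
  linarith

lemma UniformNet.exists_comp_approx {I : Type} {d : I → ℕ} (hd : ∀ i, 0 < d i) {D : ℕ} {ε δ : ℝ}
    (hε : 0 < ε) (hδ : 0 < δ) {g : I → (Fin D → ℝ) → ℝ}
    (hg01 : ∀ i, ∀ y ∈ cube D, g i y ∈ Icc (0 : ℝ) 1)
    (hg : ∀ i, ∀ y ∈ cube D, ∀ z ∈ cube D, (∀ j, |y j - z j| ≤ δ) → |g i y - g i z| ≤ ε)
    {a : Fin D → ∀ i, (Fin (d i) → ℝ) → ℝ} (ha : ∀ j, UniformNet (a j))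
    (ha01 : ∀ i, ∀ x ∈ cube (d i), (fun j => a j i x) ∈ cube D) :
    ∃ u : ∀ i, (Fin (d i) → ℝ) → ℝ, UniformNet u ∧ ∀ i, ∀ x ∈ cube (d i),
      u i x ∈ Icc (0 : ℝ) 1 ∧ |u i x - g i fun j => a j i x| ≤ 2 * ε := by
  set Λ : ℕ := ⌈1 / δ⌉₊ with hΛ
  set M : ℕ := max ⌈1 / δ⌉₊ ⌈Λ * D / ε⌉₊ + 1 with hM
  have hM0 : (0 : ℝ) < M := by positivity
  have hM1 : 1 / δ ≤ M := (Nat.le_ceil _).trans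
    (by rw [hM]; exact_mod_cast (le_max_left _ _).trans (Nat.le_succ _))
  have hM2 : Λ * D / ε ≤ M := (Nat.le_ceil _).trans
    (by rw [hM]; exact_mod_cast (le_max_right _ _).trans (Nat.le_succ _))
  have hΛδ : 1 ≤ Λ * δ := by
    rw [← div_le_iff₀ hδ]; exact Nat.le_ceil _
  have hMδ : 1 / (M : ℝ) ≤ δ := by
    rw [div_le_iff₀ hM0, mul_comm, ← div_le_iff₀ hδ]; exact hM1
  let pt : (Fin D → Fin (M + 1)) → Fin D → ℝ := fun p j => (p j : ℝ) / M
  have hpt : ∀ p, pt p ∈ cube D := fun p j _ => by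
    refine ⟨by positivity, ?_⟩
    simp only [pt]
    rw [div_le_one hM0]
    exact_mod_cast Nat.lt_succ_iff.1 (p j).2
  let bump : (Fin D → Fin (M + 1)) → ∀ i, (Fin (d i) → ℝ) → ℝ := fun p i x =>
    g i (pt p) - Λ * ∑ j, |a j i x - pt p j|
  have hbump : ∀ p, UniformNet (bump p) := fun p => by
    refine UniformNet.sub (UniformNet.const hd (fun i => g i (pt p)) fun i => ?_)
      (UniformNet.natMul hd (UniformNet.sum hd Finset.univ fun j =>
        ((ha j).sub (UniformNet.const hd (fun _ => pt p j) fun i => ?_)).absVal) Λ)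
    · have := hg01 i _ (hpt p)
      rw [abs_of_nonneg this.1]; exact this.2
    · have := hpt p j (mem_univ _)
      rw [abs_of_nonneg this.1]; exact this.2
  obtain ⟨u, hu, hu0, hule, hueq⟩ := UniformNet.exists_sup hd Finset.univ hbump
  refine ⟨u, hu, fun i x hx => ?_⟩
  set y : Fin D → ℝ := fun j => a j i x with hy
  have hycube : y ∈ cube D := ha01 i x hx
  have hsum0 : ∀ p, 0 ≤ ∑ j, |y j - pt p j| := fun p => Finset.sum_nonneg fun j _ => abs_nonneg _
  have hΛ0 : (0 : ℝ) ≤ Λ := Nat.cast_nonneg _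
  have hupper : u i x ≤ g i y + ε := by
    rcases hueq i x with h | ⟨p, -, h⟩
    · linarith [(hg01 i y hycube).1]
    · rw [h]
      change g i (pt p) - Λ * ∑ j, |y j - pt p j| ≤ g i y + ε
      by_cases hclose : ∀ j, |y j - pt p j| ≤ δ
      · have := (abs_le.1 (hg i y hycube _ (hpt p) hclose)).1
        linarith [mul_nonneg hΛ0 (hsum0 p)]
      · push Not at hclose
        obtain ⟨j, hj⟩ := hclose
        have h1 : |y j - pt p j| ≤ ∑ j, |y j - pt p j| :=
          Finset.single_le_sum (f := fun j => |y j - pt p j|) (fun j _ => abs_nonneg _)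
            (Finset.mem_univ j)
        have h2 : Λ * δ ≤ Λ * ∑ j, |y j - pt p j| :=
          mul_le_mul_of_nonneg_left (hj.le.trans h1) hΛ0
        linarith [(hg01 i y hycube).1, (hg01 i _ (hpt p)).2]
  have hlower : g i y - 2 * ε ≤ u i x := by
    obtain ⟨p, hp⟩ := exists_grid_close (show 0 < M by positivity) hycube
    refine le_trans ?_ (hule p (Finset.mem_univ p) i x)
    change g i y - 2 * ε ≤ g i (pt p) - Λ * ∑ j, |y j - pt p j|
    have h1 := (abs_le.1 (hg i y hycube _ (hpt p) fun j => (hp j).trans hMδ)).2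
    have h2 : ∑ j, |y j - pt p j| ≤ D * (1 / M) :=
      (Finset.sum_le_sum fun j _ => hp j).trans (by simp)
    have h3 : Λ * (D * (1 / M)) ≤ ε := by
      rw [div_le_iff₀ hε] at hM2
      rw [mul_one_div, mul_div_assoc', div_le_iff₀ hM0]
      linarith
    linarith [mul_le_mul_of_nonneg_left h2 hΛ0]
  refine ⟨⟨hu0 i x, ?_⟩, abs_le.2 ⟨by linarith, by linarith⟩⟩
  rcases hueq i x with h | ⟨p, -, h⟩
  · rw [h]; exact zero_le_one
  · rw [h]
    change g i (pt p) - Λ * ∑ j, |y j - pt p j| ≤ 1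
    linarith [(hg01 i _ (hpt p)).2, mul_nonneg hΛ0 (hsum0 p)]

section Composition

variable {dmax dstar : ℕ} {β r : ℝ}

lemma exists_approx_block (dmax : ℕ) (hdstar : 0 < dstar) (hβ : 0 < β) (hr : 0 < r) {ε : ℝ}
    (hε : 0 < ε) : ∃ δ > 0, ∀ (I : Type) (d m : I → ℕ) (f : ∀ i, (Fin (m i) → ℝ) → ℝ)
      (a b : ∀ i, Fin (m i) → (Fin (d i) → ℝ) → ℝ), (∀ i, 0 < d i) →
      (∀ i, f i ∈ GH (m i) dstar β r ∪ GM (m i) dmax) →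
      UniformNet (fun (p : Σ i, Fin (m i)) => b p.1 p.2) →
      (∀ i, ∀ x ∈ cube (d i), (fun j => a i j x) ∈ cube (m i)) →
      (∀ i, ∀ x ∈ cube (d i), (fun j => b i j x) ∈ cube (m i)) →
      (∀ i, ∀ x ∈ cube (d i), ∀ j, |b i j x - a i j x| ≤ δ) →
      ∃ u : ∀ i, (Fin (d i) → ℝ) → ℝ, UniformNet u ∧ ∀ i, ∀ x ∈ cube (d i),
        u i x ∈ Icc (0 : ℝ) 1 ∧ |u i x - unitClip (f i fun j => a i j x)| ≤ ε := by
  obtain ⟨δ, hδ, h⟩ := exists_block_modulus dmax hdstar hβ hr (show 0 < ε / 3 by positivity)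
  refine ⟨δ, hδ, fun I d m f a b hd hf hb ha01 hb01 hab => ?_⟩
  choose e g hfg hg using fun i => h (m i) (f i) (hf i)
  have hmod : ∀ i, ∀ y ∈ cube (dstar + dmax), ∀ z ∈ cube (dstar + dmax),
      (∀ j, |y j - z j| ≤ δ) → |unitClip (g i y) - unitClip (g i z)| ≤ ε / 3 :=
    fun i y hy z hz hyz => (abs_unitClip_sub_le _ _).trans (hg i y hy z hz hyz)
  obtain ⟨u, hu, hu'⟩ := UniformNet.exists_comp_approx hd (show 0 < ε / 3 by positivity) hδ
    (g := fun i y => unitClip (g i y)) (fun i y _ => unitClip_mem _) hmod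
    (a := fun j i => b i (e i j)) (fun j => hb.comp fun i => ⟨i, e i j⟩)
    (fun i x hx j _ => hb01 i x hx (e i j) (mem_univ _))
  refine ⟨u, hu, fun i x hx => ⟨(hu' i x hx).1, ?_⟩⟩
  rw [hfg i _ (ha01 i x hx)]
  have h1 := hmod i (fun j => b i (e i j) x) (fun j _ => hb01 i x hx _ (mem_univ _))
    (fun j => a i (e i j) x) (fun j _ => ha01 i x hx _ (mem_univ _)) fun j => hab i x hx _
  have h2 := (hu' i x hx).2
  rw [abs_le] at h1 h2 ⊢
  constructor <;> linarith [h1.1, h1.2, h2.1, h2.2]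

lemma exists_approx_comp (dmax : ℕ) (hdstar : 0 < dstar) (hβ : 0 < β) (hr : 0 < r) (q : ℕ) {ε : ℝ}
    (hε : 0 < ε) : ∃ δ > 0, ∀ (I : Type) (d m K : I → ℕ) (f : ∀ i, (Fin (m i) → ℝ) → ℝ)
      (a b : ∀ i, Fin (m i) → (Fin (d i) → ℝ) → ℝ), (∀ i, 0 < d i) →
      (∀ i, f i ∈ GCHOM (K i) dmax dstar β r q (m i)) →
      UniformNet (fun (p : Σ i, Fin (m i)) => b p.1 p.2) →
      (∀ i, ∀ x ∈ cube (d i), (fun j => a i j x) ∈ cube (m i)) →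
      (∀ i, ∀ x ∈ cube (d i), (fun j => b i j x) ∈ cube (m i)) →
      (∀ i, ∀ x ∈ cube (d i), ∀ j, |b i j x - a i j x| ≤ δ) →
      ∃ u : ∀ i, (Fin (d i) → ℝ) → ℝ, UniformNet u ∧ ∀ i, ∀ x ∈ cube (d i),
        u i x ∈ Icc (0 : ℝ) 1 ∧ |u i x - unitClip (f i fun j => a i j x)| ≤ ε := by
  induction q with
  | zero =>
    obtain ⟨δ, hδ, h⟩ := exists_approx_block dmax hdstar hβ hr hε
    refine ⟨δ, hδ, fun I d m K f a b hd hf hb ha01 hb01 hab => ?_⟩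
    choose g hg hfg using hf
    obtain ⟨u, hu, hu'⟩ := h I d m g a b hd hg hb ha01 hb01 hab
    refine ⟨u, hu, fun i x hx => ?_⟩
    rw [hfg i _ (ha01 i x hx)]
    exact hu' i x hx
  | succ q ih =>
    obtain ⟨δ', hδ', ih⟩ := ih
    obtain ⟨δ, hδ, h⟩ := exists_approx_block dmax hdstar hβ hr hδ'
    refine ⟨δ, hδ, fun I d m K f a b hd hf hb ha01 hb01 hab => ?_⟩
    choose H g hH hH01 hg hfg using hf
    obtain ⟨u, hu, hu'⟩ := h (Σ i, Fin (K i)) (fun p => d p.1) (fun p => m p.1)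
      (fun p x => H p.1 x p.2) (fun p => a p.1) (fun p => b p.1) (fun p => hd p.1)
      (fun p => hH p.1 p.2) (hb.comp fun p : Σ p : Σ i, Fin (K i), Fin (m p.1) => ⟨p.1.1, p.2⟩) (fun p => ha01 p.1)
      (fun p => hb01 p.1) (fun p => hab p.1)
    obtain ⟨w, hw, hw'⟩ := ih I d K K g (fun i j x => H i (fun k => a i k x) j)
      (fun i j => u ⟨i, j⟩) hd hg hu (fun i x hx => hH01 i _ (ha01 i x hx))
      (fun i x hx j _ => (hu' ⟨i, j⟩ x hx).1) (fun i x hx j => by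
        have h1 := (hu' ⟨i, j⟩ x hx).2
        rwa [unitClip_of_mem (hH01 i _ (ha01 i x hx) j (mem_univ _))] at h1)
    refine ⟨w, hw, fun i x hx => ?_⟩
    rw [hfg i _ (ha01 i x hx)]
    exact hw' i x hx

/-- Networks of size depending only on the smoothness parameters and `t` reproduce the Bayes
classifier wherever the noise level is bounded away from one half by `t`. -/
lemma exists_bayes_net (dmax : ℕ) (hdstar : 0 < dstar) (hβ : 0 < β) (hr : 0 < r) (q : ℕ) {t : ℝ}
    (ht : 0 < t) : ∃ c : ℕ, 0 < c ∧ ∀ (d K : ℕ), 0 < d → ∀ f ∈ GCHOM K dmax dstar β r q d,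
      ∀ (G N B : ℝ) (S : ℝ≥0∞), (c : ℝ) ≤ G → (c : ℝ) ≤ N → (d : ℝ) ≤ N → 1 ≤ B →
      (c : ℝ≥0∞) ≤ S → ∃ f₀ ∈ FNN d G N S B ∞, ∀ x ∈ cube d, f x ∈ Icc (0 : ℝ) 1 →
        t ≤ |2 * f x - 1| → f₀ x = sgn (2 * f x - 1) := by
  obtain ⟨δ, hδ, h⟩ := exists_approx_comp dmax hdstar hβ hr q (show 0 < t / 4 by positivity)
  let I : Type := {p : Σ d : ℕ, ℕ × ((Fin d → ℝ) → ℝ) //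
    0 < p.1 ∧ p.2.2 ∈ GCHOM p.2.1 dmax dstar β r q p.1}
  have hd : ∀ i : I, 0 < i.1.1 := fun i => i.2.1
  obtain ⟨u, hu, hu'⟩ := h I (fun i => i.1.1) (fun i => i.1.1) (fun i => i.1.2.1)
    (fun i => i.1.2.2) (fun _ j x => x j) (fun _ j x => x j) hd (fun i => i.2.2)
    (UniformNet.coord (d := fun p : Σ i : I, Fin i.1.1 => p.1.1.1) fun p => p.2) (fun _ _ hx => hx) (fun _ _ hx => hx) (by simp [hδ.le])
  set M : ℕ := ⌈4 / t⌉₊ with hM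
  have hMt : 1 ≤ M * (t / 4) := by
    have := Nat.le_ceil (4 / t)
    rw [← hM, div_le_iff₀ ht] at this
    linarith
  have hhalf : UniformNet (d := fun i : I => i.1.1) fun _ _ => 1 / 2 :=
    UniformNet.const hd (fun _ => 1 / 2) fun _ => by rw [abs_of_pos] <;> norm_num
  have hone : UniformNet (d := fun i : I => i.1.1) fun _ _ => 1 :=
    UniformNet.const hd (fun _ => 1) fun _ => by simp
  have hz := (hu.sub hhalf).natMul hd M
  obtain ⟨c, hc, hnet⟩ := (((hz.add hone).relu.sub (hz.sub hone).relu).sub hone).exists_size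
  refine ⟨c, hc, fun d K hd f hf G N B S hG hN hdN hB hS => ?_⟩
  let i : I := ⟨⟨d, K, f⟩, hd, hf⟩
  obtain ⟨f₀, hf₀, heq⟩ := hnet i G N B S hG hN hdN hB hS
  refine ⟨f₀, hf₀, fun x hx hf01 hft => ?_⟩
  rw [heq x hx]
  have happ : |u i x - f x| ≤ t / 4 := by
    have := (hu' i x hx).2
    rwa [show (i.1.2.2 fun j => x j) = f x from rfl, unitClip_of_mem hf01] at this
  rw [abs_le] at happ
  have hM0 : (0 : ℝ) ≤ M := Nat.cast_nonneg M
  unfold sgn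
  rcases le_abs.1 hft with h1 | h1
  · rw [if_pos (by linarith)]
    have : M * (t / 4) ≤ M * (u i x - 1 / 2) := mul_le_mul_of_nonneg_left (by linarith) hM0
    rw [max_eq_right (by linarith), max_eq_right (by linarith)]
    ring
  · rw [if_neg (by linarith)]
    have : M * (u i x - 1 / 2) ≤ M * -(t / 4) := mul_le_mul_of_nonneg_left (by linarith) hM0
    rw [max_eq_left (by linarith), max_eq_left (by linarith)]
    ring

end Composition

/-! ## The rate -/

lemma ae_margin {d : ℕ} {D : DataDist d} {α t : ℝ} {τ : ℝ≥0∞} (hD : D ∈ Tsybakov d ∞ α τ)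
    (ht0 : 0 < t) (ht1 : t < 1) (htτ : ENNReal.ofReal t ≤ τ) :
    ∀ᵐ x ∂D.Q, t ≤ |2 * D.η x - 1| := by
  have h := hD t ht0 htτ
  have h1 : ENNReal.ofReal t < 1 := by simpa using ht1
  rw [rpowE, if_pos rfl, if_pos h1, mul_zero, nonpos_iff_eq_zero] at h
  have h2 : ∀ᵐ x ∂D.Q, x ∉ {x | |2 * D.η x - 1| ≤ t} ∩ cube d := measure_eq_zero_iff_ae_notMem.1 h
  filter_upwards [h2, ae_mem_cube D] with x hx hxc
  by_contra! hlt
  exact hx ⟨hlt.le, hxc⟩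

lemma FNN.le_width {d : ℕ} {G N B : ℝ} {S Fb : ℝ≥0∞} {f : (Fin d → ℝ) → ℝ}
    (hf : f ∈ FNN d G N S B Fb) : (d : ℝ) ≤ N := by
  obtain ⟨net, -, -, hw, -⟩ := hf
  simpa [net.h0] using hw 0 (Nat.zero_le _)

/-- Theorem 3.2 : fast rate for hinge-loss ReLU DNN classifiers, `s = ∞`. -/
theorem statement_3
    (dmax dstar q : ℕ) (hdmax : 0 < dmax) (hdstar : 0 < dstar)
    (β r : ℝ) (hβ : 0 < β) (hr : 0 < r) (τ : ℝ≥0∞) (hτ : 0 < τ) :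
    ∃ c4 : ℝ, 0 < c4 ∧
      ∀ (d : ℕ), 0 < d → ∀ (α : ℝ), 0 < α → ∀ (ν : ℝ), 0 ≤ ν → ∀ (b : ℝ), 0 < b →
      ∃ c5 : ℝ, 0 < c5 ∧
        ∀ (n K : ℕ) (G N B : ℝ) (S : ℝ≥0∞),
          0 < K → 0 < G → 1 ≤ N → 0 < S → 0 < B →
          dstar ≤ d → dstar * q ≤ K * q → ¬(α < 1 ∧ 1 ≤ τ) →
          2 ≤ n →
          c4 ≤ G → G ≤ b → (K : ℝ) * c4 ≤ N → N ≤ b →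
          1 ≤ B → B ≤ b * (n : ℝ) ^ ν →
          ENNReal.ofReal ((K : ℝ) * c4) ≤ S →
          ∀ A : Estimator d n, A.Meas → (∀ ω, IsERM hinge (FNN d G N S B ∞) ω (A ω)) →
          (⨆ D : ↥(HCHOM d q K dstar dmax β r ∩ Tsybakov d ∞ α τ),
              expectedExcess01 D.1.P A) ≤ c5 * Real.log n / n := by
  have hmin : min τ (1 / 2) ≠ ∞ := (min_lt_of_right_lt (by simp)).ne
  obtain ⟨t, ht0, ht1, htτ⟩ : ∃ t : ℝ, 0 < t ∧ t < 1 ∧ ENNReal.ofReal t ≤ τ := by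
    refine ⟨(min τ (1 / 2)).toReal, ENNReal.toReal_pos (lt_min hτ (by simp)).ne' hmin, ?_, ?_⟩
    · have := ENNReal.toReal_mono (by simp) (min_le_right τ (1 / 2))
      refine this.trans_lt ?_
      norm_num
    · rw [ENNReal.ofReal_toReal hmin]
      exact min_le_left _ _
  obtain ⟨c, hc, hnet⟩ := exists_bayes_net dmax hdstar hβ hr q ht0
  have hc' : (0 : ℝ) < c := by exact_mod_cast hc
  refine ⟨c, hc', fun d hd α _ ν hν b _ => ?_⟩
  rcases lt_or_ge b 1 with hb | hb
  · refine ⟨1, one_pos, fun n K G N B S _ _ hN _ _ _ _ _ _ _ _ _ hNb => ?_⟩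
    linarith
  obtain ⟨C, hC, hcover⟩ := exists_cover d hb hν
  have hlog2 : 0 < Real.log 2 := Real.log_pos (by norm_num)
  refine ⟨3 / Real.log 2 + 8 * C / t, by positivity, ?_⟩
  intro n K G N B S hK _ _ _ _ _ _ _ hn hcG hGb hcN hNb hB hBn hcS A hA hERM
  have hn0 : (0 : ℝ) < n := by exact_mod_cast (by omega : 0 < n)
  have hlogn : Real.log 2 ≤ Real.log n := Real.log_le_log (by norm_num) (by exact_mod_cast hn)
  have hcK : (c : ℝ) ≤ K * c := by
    have : (1 : ℝ) ≤ K := by exact_mod_cast hK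
    nlinarith
  have hlogn0 : 0 ≤ Real.log n := hlog2.le.trans hlogn
  refine Real.iSup_le ?_ (by positivity)
  rintro ⟨D, ⟨f, hf, hηf⟩, hD⟩
  have hAF : ∀ ω, A ω ∈ FNN d G N S B ∞ := fun ω => (hERM ω).1
  have hcS' : (c : ℝ≥0∞) ≤ S := by
    refine le_trans ?_ hcS
    rw [← ENNReal.ofReal_natCast]
    exact ENNReal.ofReal_le_ofReal hcK
  obtain ⟨f₀, hf₀, hbayes⟩ := hnet d K hd f hf G N B S hcG (hcK.trans hcN)
    (FNN.le_width (hAF 0)) hB hcS'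
  have hmargin := ae_margin hD ht0 ht1 htτ
  have hf₀' : ∀ᵐ x ∂D.Q, f₀ x = D.bayes x := by
    filter_upwards [hmargin, hηf, ae_mem_cube D] with x hx hxf hxc
    rw [DataDist.bayes, hxf]
    rw [hxf] at hx
    exact hbayes x hxc (hxf ▸ D.η_mem x) hx
  obtain ⟨M, k, g, hgm, hcard, hgc⟩ := hcover n G N B S ∞ hn hGb hNb hB hBn
  have hmain := expectedExcess01_le D ht0 ht1.le hmargin hf₀' hgm (by omega : 0 < n) hA
    (fun ω => le_of_mul_le_mul_left ((hERM ω).2 f₀ hf₀) (by positivity)) fun ω => hgc _ (hAF ω)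
  refine hmain.trans ?_
  have h3 : 3 ≤ 3 / Real.log 2 * Real.log n := by
    rw [div_mul_eq_mul_div, le_div_iff₀ hlog2]
    linarith
  calc 3 / (n : ℝ) + 8 / (n * t) * Real.log (Fintype.card (Code M k))
      ≤ 3 / Real.log 2 * Real.log n / n + 8 / (n * t) * (C * Real.log n) := by gcongr
    _ = (3 / Real.log 2 + 8 * C / t) * Real.log n / n := by
      field_simp

end ZZS
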